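/- Assume conditions A1–A3 hold. For any p ≥ 2 there exists C_p > 0 such that for all sufficiently small ε > 0, sup_{t≥0} E|Y^ε_t|^p ≤ C_p (1 + E|ζ|^p). -/

import Mathlib

open MeasureTheory Filter
open scoped ENNReal NNReal Topology RealInnerProductSpace

set_option maxSynthPendingDepth 3

noncomputable section

namespace DiffApprox

/-- Euclidean space `ℝ^k`. -/
abbrev Vec (k : ℕ) : Type := EuclideanSpace ℝ (Fin k)

/-- `k × l` real matrices, viewed as continuous linear maps `ℝ^l → ℝ^k`. -/
abbrev Mat (k l : ℕ) : Type := Vec l →L[ℝ] Vec k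

/-- `μ` belongs to the 2-Wasserstein space `𝒫₂(ℝ^k)`. -/
def memP2 {k : ℕ} (μ : Measure (Vec k)) : Prop :=
  IsProbabilityMeasure μ ∧ (∫⁻ x, (‖x‖₊ : ℝ≥0∞) ^ (2 : ℕ) ∂μ) < ⊤

/-- `π` is a coupling of `μ` and `ν`. -/
def IsCoupling {k : ℕ} (π : Measure (Vec k × Vec k)) (μ ν : Measure (Vec k)) : Prop :=
  π.map Prod.fst = μ ∧ π.map Prod.snd = ν

/-- The 2-Wasserstein distance. -/
def W2 {k : ℕ} (μ ν : Measure (Vec k)) : ℝ :=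
  sInf {c : ℝ | ∃ π : Measure (Vec k × Vec k), IsCoupling π μ ν ∧
    c = Real.sqrt (∫ p, ‖p.1 - p.2‖ ^ (2 : ℕ) ∂π)}

/-- Trace of an endomorphism of `ℝ^k`. -/
def trCLM {k : ℕ} (A : Vec k →L[ℝ] Vec k) : ℝ :=
  LinearMap.trace ℝ (Vec k) A.toLinearMap

/-- Hilbert space adjoint (matrix transpose). -/
def adj {k l : ℕ} (A : Mat k l) : Mat l k := ContinuousLinearMap.adjoint A

/-- The outer product `(a ⊗ b) v = ⟪b, v⟫ • a`, i.e. `(a ⊗ b)_{ij} = aᵢ bⱼ`. -/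
def outer {k : ℕ} (a b : Vec k) : Mat k k := (innerSL ℝ b).smulRight a

/-- Hessian of a scalar function. -/
def hess {k : ℕ} (φ : Vec k → ℝ) (y : Vec k) : Vec k →L[ℝ] Vec k :=
  fderiv ℝ (gradient φ) y

/-- Mixed second derivative `∂²_{xy} φ`. -/
def hessMixed {k l : ℕ} (φ : Vec k → Vec l → ℝ) (x : Vec k) (y : Vec l) :
    Vec k →L[ℝ] Vec l :=
  fderiv ℝ (fun x' => gradient (φ x') y) x

/-- `C²` test function with compact support. -/
def TestFun {k : ℕ} (φ : Vec k → ℝ) : Prop :=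
  ContDiff ℝ 2 φ ∧ HasCompactSupport φ

/-- `C²` test function of two variables with compact support. -/
def TestFun2 {k l : ℕ} (φ : Vec k → Vec l → ℝ) : Prop :=
  ContDiff ℝ 2 (Function.uncurry φ) ∧ HasCompactSupport (Function.uncurry φ)

/-- Generator `L₂(x,μ)` of the frozen equation `dY = f(x,μ,Y)dt + g(x,μ,Y)dW`. -/
def genFrozen {n m d : ℕ} (f : Vec n → Measure (Vec n) → Vec m → Vec m)
    (g : Vec n → Measure (Vec n) → Vec m → Mat m d) (x : Vec n) (μ : Measure (Vec n))
    (φ : Vec m → ℝ) (y : Vec m) : ℝ :=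
  ⟪f x μ y, gradient φ y⟫ +
    (1 / 2) * trCLM (((g x μ y).comp (adj (g x μ y))).comp (hess φ y))

/-- `ν` is an invariant probability measure of the frozen equation. -/
def IsInvariantMeasure {n m d : ℕ} (f : Vec n → Measure (Vec n) → Vec m → Vec m)
    (g : Vec n → Measure (Vec n) → Vec m → Mat m d) (x : Vec n) (μ : Measure (Vec n))
    (ν : Measure (Vec m)) : Prop :=
  IsProbabilityMeasure ν ∧ ∀ φ : Vec m → ℝ, TestFun φ → ∫ y, genFrozen f g x μ φ y ∂ν = 0

/-- `M` is a martingale on `[0, ∞)` w.r.t. the filtration `ℱ`. -/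
def MartOn {Ω : Type} {mΩ : MeasurableSpace Ω} (P : Measure Ω) (ℱ : Filtration ℝ mΩ)
    (M : ℝ → Ω → ℝ) : Prop :=
  (∀ t : ℝ, 0 ≤ t → StronglyMeasurable[ℱ t] (M t) ∧ Integrable (M t) P) ∧
    ∀ s t : ℝ, 0 ≤ s → s ≤ t → P[M t|ℱ s] =ᵐ[P] M s

/-- The coefficients of the slow–fast McKean–Vlasov system. -/
structure Coeffs (n m d : ℕ) where
  b : Vec n → Measure (Vec n) → Vec m → Vec n
  K : Vec n → Measure (Vec n) → Vec m → Vec n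
  σ : Vec n → Measure (Vec n) → Vec m → Mat n d
  f : Vec n → Measure (Vec n) → Vec m → Vec m
  h : Vec n → Measure (Vec n) → Vec m → Vec m
  g : Vec n → Measure (Vec n) → Vec m → Mat m d

/-- Generator of the coupled slow–fast system `(X^ε, Y^ε)` with frozen distribution `μ`. -/
def genSF {n m d : ℕ} (C : Coeffs n m d) (ε : ℝ) (μ : Measure (Vec n))
    (φ : Vec n → Vec m → ℝ) (x : Vec n) (y : Vec m) : ℝ :=
  ⟪C.b x μ y + (Real.sqrt ε)⁻¹ • C.K x μ y, gradient (fun x' => φ x' y) x⟫ +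
    ⟪ε⁻¹ • C.f x μ y + (Real.sqrt ε)⁻¹ • C.h x μ y, gradient (φ x) y⟫ +
    (1 / 2) * trCLM (((C.σ x μ y).comp (adj (C.σ x μ y))).comp (hess (fun x' => φ x' y) x)) +
    (1 / (2 * ε)) * trCLM (((C.g x μ y).comp (adj (C.g x μ y))).comp (hess (φ x) y)) +
    (Real.sqrt ε)⁻¹ * trCLM (((C.σ x μ y).comp (adj (C.g x μ y))).comp (hessMixed φ x y))

/-- `(X, Y)` is a (weak–martingale problem) solution of the slow–fast McKean–Vlasov
system with scale parameter `ε` and initial data `(ξ, ζ)`. -/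
structure IsSFSolution {n m d : ℕ} (C : Coeffs n m d) (ε : ℝ) {Ω : Type}
    [mΩ : MeasurableSpace Ω] (P : Measure Ω) (ℱ : Filtration ℝ mΩ)
    (X : ℝ → Ω → Vec n) (Y : ℝ → Ω → Vec m) (ξ : Ω → Vec n) (ζ : Ω → Vec m) : Prop where
  measX : ∀ t, Measurable (X t)
  measY : ∀ t, Measurable (Y t)
  adaptX : Adapted ℱ X
  adaptY : Adapted ℱ Y
  initX : ∀ᵐ ω ∂P, X 0 ω = ξ ω
  initY : ∀ᵐ ω ∂P, Y 0 ω = ζ ω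
  lawP2X : ∀ t, 0 ≤ t → memP2 (P.map (X t))
  contX : ∀ ω, Continuous fun t => X t ω
  contY : ∀ ω, Continuous fun t => Y t ω
  mart : ∀ φ : Vec n → Vec m → ℝ, TestFun2 φ →
    MartOn P ℱ fun t ω =>
      φ (X t ω) (Y t ω) -
        ∫ s in Set.Ioc (0 : ℝ) t, genSF C ε (P.map (X s)) φ (X s ω) (Y s ω)

/-- Generator of a distribution dependent SDE `dX = Θ(X, ℒ_X) dt + Σ(X, ℒ_X) dW`
with `A = Σ Σ*`. -/
def genLim {n : ℕ} (Θ : Vec n → Measure (Vec n) → Vec n)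
    (A : Vec n → Measure (Vec n) → Mat n n) (μ : Measure (Vec n)) (U : Vec n → ℝ)
    (x : Vec n) : ℝ :=
  ⟪Θ x μ, gradient U x⟫ + (1 / 2) * trCLM ((A x μ).comp (hess U x))

/-- `X` is a (weak) solution of the McKean–Vlasov SDE with drift `Θ`, squared diffusion
`A = Σ Σ*` and initial datum `ξ`. -/
structure IsLimitSolution {n : ℕ} (Θ : Vec n → Measure (Vec n) → Vec n)
    (A : Vec n → Measure (Vec n) → Mat n n) {Ω : Type} [mΩ : MeasurableSpace Ω]
    (P : Measure Ω) (ℱ : Filtration ℝ mΩ) (X : ℝ → Ω → Vec n) (ξ : Ω → Vec n) : Prop where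
  measX : ∀ t, Measurable (X t)
  adaptX : Adapted ℱ X
  initX : ∀ᵐ ω ∂P, X 0 ω = ξ ω
  contX : ∀ ω, Continuous fun t => X t ω
  mart : ∀ U : Vec n → ℝ, TestFun U →
    MartOn P ℱ fun t ω =>
      U (X t ω) - ∫ s in Set.Ioc (0 : ℝ) t, genLim Θ A (P.map (X s)) U (X s ω)

/-- Generator of the synchronous coupling of two copies of the frozen equation,
driven by the same Brownian motion. -/
def genPair {n m d : ℕ} (f : Vec n → Measure (Vec n) → Vec m → Vec m)
    (g : Vec n → Measure (Vec n) → Vec m → Mat m d) (x1 : Vec n) (μ1 : Measure (Vec n))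
    (x2 : Vec n) (μ2 : Measure (Vec n)) (φ : Vec m → Vec m → ℝ) (y1 y2 : Vec m) : ℝ :=
  ⟪f x1 μ1 y1, gradient (fun z => φ z y2) y1⟫ + ⟪f x2 μ2 y2, gradient (φ y1) y2⟫ +
    (1 / 2) * trCLM (((g x1 μ1 y1).comp (adj (g x1 μ1 y1))).comp (hess (fun z => φ z y2) y1)) +
    (1 / 2) * trCLM (((g x2 μ2 y2).comp (adj (g x2 μ2 y2))).comp (hess (φ y1) y2)) +
    trCLM (((g x1 μ1 y1).comp (adj (g x2 μ2 y2))).comp (hessMixed φ y1 y2))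

/-- The uniform probability measure on `[0,1]`, a rich atomless probability space used
to define the Lions derivative by lifting to `L²`. -/
def P01 : Measure ℝ := volume.restrict (Set.Icc (0 : ℝ) 1)

/-- `D` is the Lions derivative of `u : 𝒫₂(ℝ^k) → E` at `μ`: the lift of `u` to
`L²(Ω₀; ℝ^k)` is Fréchet differentiable at every `X` with law `μ` with derivative
represented by `D ∘ X`. -/
def IsLionsDeriv {k : ℕ} {E : Type*} [NormedAddCommGroup E] [NormedSpace ℝ E]
    [CompleteSpace E] (u : Measure (Vec k) → E) (μ : Measure (Vec k))
    (D : Vec k → (Vec k →L[ℝ] E)) : Prop :=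
  ∀ X : Lp (Vec k) 2 P01, P01.map (X : ℝ → Vec k) = μ →
    ∃ L : Lp (Vec k) 2 P01 →L[ℝ] E,
      HasFDerivAt (fun Z : Lp (Vec k) 2 P01 => u (P01.map (Z : ℝ → Vec k))) L X ∧
        ∀ H : Lp (Vec k) 2 P01, L H = ∫ ω, D (X ω) (H ω) ∂P01

/-- `L²(μ)`-norm of a kernel `D`. -/
def l2n {k : ℕ} {E : Type*} [NormedAddCommGroup E] (μ : Measure (Vec k)) (D : Vec k → E) : ℝ :=
  Real.sqrt (∫ z, ‖D z‖ ^ (2 : ℕ) ∂μ)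

/-- `F(·, μ, ·) ∈ C_b^{3,3}` uniformly in `μ`:
three bounded continuous (mixed) derivatives in `(x,y)`. -/
def Cb3 {n m : ℕ} {E : Type*} [NormedAddCommGroup E] [NormedSpace ℝ E]
    (F : Vec n → Measure (Vec n) → Vec m → E) (CB : ℝ) : Prop :=
  ∀ μ : Measure (Vec n), memP2 μ →
    ContDiff ℝ 3 (fun p : Vec n × Vec m => F p.1 μ p.2) ∧
      ∀ i : ℕ, 1 ≤ i → i ≤ 3 → ∀ p : Vec n × Vec m,
        ‖iteratedFDeriv ℝ i (fun q : Vec n × Vec m => F q.1 μ q.2) p‖ ≤ CB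

/-- The Lions-derivative part of condition A3: `F` admits a Lions derivative in the
measure variable, bounded, with bounded and `γ₁`-Hölder (in `y`) derivatives. -/
def A3lions {n m : ℕ} {E : Type*} [NormedAddCommGroup E] [NormedSpace ℝ E] [CompleteSpace E]
    (F : Vec n → Measure (Vec n) → Vec m → E) (CB γ1 : ℝ) : Prop :=
  ∃ D : Vec n → Measure (Vec n) → Vec m → Vec n → (Vec n →L[ℝ] E),
    (∀ x μ y, memP2 μ → IsLionsDeriv (fun μ' => F x μ' y) μ (D x μ y)) ∧
    (∀ x μ y z, ‖D x μ y z‖ ≤ CB) ∧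
    (∀ x μ y z, ‖fderiv ℝ (D x μ y) z‖ ≤ CB) ∧
    (∀ x μ y1 y2 z,
      ‖fderiv ℝ (D x μ y1) z - fderiv ℝ (D x μ y2) z‖ ≤ CB * ‖y1 - y2‖ ^ γ1) ∧
    (∀ x μ z y, ‖fderiv ℝ (fun y' => D x μ y' z) y‖ ≤ CB) ∧
    (∀ x μ z y1 y2,
      ‖fderiv ℝ (fun y' => D x μ y' z) y1 - fderiv ℝ (fun y' => D x μ y' z) y2‖ ≤
        CB * ‖y1 - y2‖ ^ γ1)

/-- Conditions A1–A3 of the paper for the coefficients of the slow–fast system. -/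
structure SA13 {n m d : ℕ} (C : Coeffs n m d) where
  CL : ℝ
  γ : ℝ
  hγ : 0 < γ
  ς : ℝ
  hς : ς ∈ Set.Ioo (0 : ℝ) 1
  CG : ℝ
  CB : ℝ
  γ1 : ℝ
  hγ1 : γ1 ∈ Set.Ioc (0 : ℝ) 1
  lipSlow : ∀ x1 x2 μ1 μ2 y1 y2, memP2 μ1 → memP2 μ2 →
    ‖C.b x1 μ1 y1 - C.b x2 μ2 y2‖ + ‖C.K x1 μ1 y1 - C.K x2 μ2 y2‖ +
        ‖C.σ x1 μ1 y1 - C.σ x2 μ2 y2‖ ≤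
      CL * (‖x1 - x2‖ + ‖y1 - y2‖ + W2 μ1 μ2)
  lipFast : ∀ x1 x2 μ1 μ2 y1 y2, memP2 μ1 → memP2 μ2 →
    ‖C.f x1 μ1 y1 - C.f x2 μ2 y2‖ + ‖C.h x1 μ1 y1 - C.h x2 μ2 y2‖ +
        ‖C.g x1 μ1 y1 - C.g x2 μ2 y2‖ ≤
      CL * (‖x1 - x2‖ + ‖y1 - y2‖ + W2 μ1 μ2)
  dissip : ∀ x μ y1 y2, memP2 μ →
    2 * ⟪C.f x μ y1 - C.f x μ y2, y1 - y2⟫ + ‖C.g x μ y1 - C.g x μ y2‖ ^ (2 : ℕ) ≤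
      -γ * ‖y1 - y2‖ ^ (2 : ℕ)
  growth : ∀ x μ y, memP2 μ →
    ‖C.K x μ y‖ + ‖C.f x μ y‖ + ‖C.h x μ y‖ + ‖C.σ x μ y‖ ≤ CG * (1 + ‖y‖)
  growthg : ∀ x μ y, memP2 μ → ‖C.g x μ y‖ ≤ CG * (1 + ‖y‖ ^ ς)
  smoothK : Cb3 C.K CB
  smoothf : Cb3 C.f CB
  smoothg : Cb3 C.g CB
  lionsK : A3lions C.K CB γ1
  lionsf : A3lions C.f CB γ1
  lionsg : A3lions C.g CB γ1

/-- Conditions A1–A4 of the paper, together with the invariant measures `ν^{x,μ}` of the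
frozen equation and the solution `Φ` of the Poisson equation `-L₂(x,μ)Φ = K`. -/
structure SA {n m d : ℕ} (C : Coeffs n m d) extends SA13 C where
  ν : Vec n → Measure (Vec n) → Measure (Vec m)
  Φ : Vec n → Measure (Vec n) → Vec m → Vec n
  invν : ∀ x μ, memP2 μ → IsInvariantMeasure C.f C.g x μ (ν x μ)
  uniqν : ∀ x μ, memP2 μ → ∀ ν' : Measure (Vec m), IsInvariantMeasure C.f C.g x μ ν' →
    ν' = ν x μ
  centering : ∀ x μ, memP2 μ → ∫ y, C.K x μ y ∂(ν x μ) = 0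
  smoothΦ : ∀ μ, memP2 μ → ContDiff ℝ 3 fun p : Vec n × Vec m => Φ p.1 μ p.2
  poisson : ∀ x μ y (i : Fin n), memP2 μ →
    genFrozen C.f C.g x μ (fun y' => Φ x μ y' i) y = -(C.K x μ y i)

/-- The matrix-valued map `(∂_y Φ) g`. -/
def dyPhiG {n m d : ℕ} (Φ : Vec n → Measure (Vec n) → Vec m → Vec n)
    (g : Vec n → Measure (Vec n) → Vec m → Mat m d) (x : Vec n) (μ : Measure (Vec n))
    (y : Vec m) : Mat n d :=
  (fderiv ℝ (fun y' => Φ x μ y') y).comp (g x μ y)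

/-- Averaged drift `Θ(x,μ) = (b + ∂ₓΦ_K + ∂_yΦ_h + Tr[∂²_{xy}Φ_{σg*}])‾(x,μ)`. -/
def Theta {n m d : ℕ} (C : Coeffs n m d) (ν : Vec n → Measure (Vec n) → Measure (Vec m))
    (Φ : Vec n → Measure (Vec n) → Vec m → Vec n) (x : Vec n) (μ : Measure (Vec n)) :
    Vec n :=
  ∫ y,
    (C.b x μ y + fderiv ℝ (fun x' => Φ x' μ y) x (C.K x μ y) +
      fderiv ℝ (fun y' => Φ x μ y') y (C.h x μ y) +
      (EuclideanSpace.equiv (Fin n) ℝ).symm fun i =>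
        trCLM (((C.σ x μ y).comp (adj (C.g x μ y))).comp
          (fderiv ℝ (fun x' => gradient (fun y' => Φ x' μ y' i) y) x)))
    ∂(ν x μ)

/-- Averaged squared diffusion
`((K⊗Φ) + (K⊗Φ)* + (σg*)∂_yΦ + [(σg*)∂_yΦ]* + σσ*)‾(x,μ)`. -/
def AMat1 {n m d : ℕ} (C : Coeffs n m d) (ν : Vec n → Measure (Vec n) → Measure (Vec m))
    (Φ : Vec n → Measure (Vec n) → Vec m → Vec n) (x : Vec n) (μ : Measure (Vec n)) :
    Mat n n :=
  ∫ y,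
    (outer (C.K x μ y) (Φ x μ y) + adj (outer (C.K x μ y) (Φ x μ y)) +
      ((C.σ x μ y).comp (adj (C.g x μ y))).comp (adj (fderiv ℝ (fun y' => Φ x μ y') y)) +
      adj (((C.σ x μ y).comp (adj (C.g x μ y))).comp
        (adj (fderiv ℝ (fun y' => Φ x μ y') y))) +
      (C.σ x μ y).comp (adj (C.σ x μ y)))
    ∂(ν x μ)

/-- Averaged squared diffusion `((∂_yΦ_g + σ)(∂_yΦ_g + σ)*)‾(x,μ)`. -/
def AMat2 {n m d : ℕ} (C : Coeffs n m d) (ν : Vec n → Measure (Vec n) → Measure (Vec m))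
    (Φ : Vec n → Measure (Vec n) → Vec m → Vec n) (x : Vec n) (μ : Measure (Vec n)) :
    Mat n n :=
  ∫ y, ((dyPhiG Φ C.g x μ y + C.σ x μ y).comp (adj (dyPhiG Φ C.g x μ y + C.σ x μ y)))
    ∂(ν x μ)

/-- `A` is a symmetric positive semi-definite matrix. -/
def IsPSD {k : ℕ} (A : Mat k k) : Prop :=
  adj A = A ∧ ∀ v : Vec k, 0 ≤ ⟪A v, v⟫

instance instPathMeasurableSpace {α E : Type*} [TopologicalSpace α] [TopologicalSpace E] :
    MeasurableSpace C(α, E) := borel _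

/-- The path `t ↦ X t ω` on `[0,T]`, as an element of `C([0,T]; ℝ^k)`
(junk value if the path is not continuous). -/
def pathOf {Ω : Type} {k : ℕ} (X : ℝ → Ω → Vec k) (T : ℝ) (ω : Ω) :
    C(Set.Icc (0 : ℝ) T, Vec k) := by
  classical
  exact if h : Continuous fun t : ℝ => X t ω then
    ⟨fun t => X t.1 ω, h.comp continuous_subtype_val⟩
  else 0

/-- A family of measures is (uniformly) tight. -/
def TightFamily {α : Type*} [TopologicalSpace α] [MeasurableSpace α]
    (S : Set (Measure α)) : Prop :=
  ∀ δ : ℝ, 0 < δ → ∃ Kc : Set α, IsCompact Kc ∧ ∀ μ ∈ S, μ Kcᶜ ≤ ENNReal.ofReal δ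

/-- The frozen equation `dY_t = f(x,μ,Y_t) dt + g(x,μ,Y_t) dW_t` under conditions A1–A2:
`Y x μ y` is its solution starting from `y` (weak/martingale-problem formulation, with the
synchronous coupling of any two copies recorded via `martPair`), and `ν x μ` is its unique
invariant probability measure. -/
structure FrozenSetting (n m d : ℕ) (Ω : Type) [mΩ : MeasurableSpace Ω] (P : Measure Ω)
    (ℱ : Filtration ℝ mΩ) where
  f : Vec n → Measure (Vec n) → Vec m → Vec m
  g : Vec n → Measure (Vec n) → Vec m → Mat m d
  CL : ℝ
  γ : ℝ
  hγ : 0 < γ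
  ς : ℝ
  hς : ς ∈ Set.Ioo (0 : ℝ) 1
  CG : ℝ
  probP : IsProbabilityMeasure P
  lip : ∀ x1 x2 μ1 μ2 y1 y2, memP2 μ1 → memP2 μ2 →
    ‖f x1 μ1 y1 - f x2 μ2 y2‖ + ‖g x1 μ1 y1 - g x2 μ2 y2‖ ≤
      CL * (‖x1 - x2‖ + ‖y1 - y2‖ + W2 μ1 μ2)
  dissip : ∀ x μ y1 y2, memP2 μ →
    2 * ⟪f x μ y1 - f x μ y2, y1 - y2⟫ + ‖g x μ y1 - g x μ y2‖ ^ (2 : ℕ) ≤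
      -γ * ‖y1 - y2‖ ^ (2 : ℕ)
  growthf : ∀ x μ y, memP2 μ → ‖f x μ y‖ ≤ CG * (1 + ‖y‖)
  growthg : ∀ x μ y, memP2 μ → ‖g x μ y‖ ≤ CG * (1 + ‖y‖ ^ ς)
  Y : Vec n → Measure (Vec n) → Vec m → ℝ → Ω → Vec m
  measY : ∀ x μ y t, Measurable (Y x μ y t)
  initY : ∀ x μ y ω, Y x μ y 0 ω = y
  contY : ∀ x μ y ω, Continuous fun t => Y x μ y t ω
  mart : ∀ x μ y, memP2 μ → ∀ φ : Vec m → ℝ, TestFun φ →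
    MartOn P ℱ fun t ω =>
      φ (Y x μ y t ω) - ∫ s in Set.Ioc (0 : ℝ) t, genFrozen f g x μ φ (Y x μ y s ω)
  martPair : ∀ x1 μ1 y1 x2 μ2 y2, memP2 μ1 → memP2 μ2 → ∀ φ : Vec m → Vec m → ℝ,
    TestFun2 φ →
    MartOn P ℱ fun t ω =>
      φ (Y x1 μ1 y1 t ω) (Y x2 μ2 y2 t ω) -
        ∫ s in Set.Ioc (0 : ℝ) t,
          genPair f g x1 μ1 x2 μ2 φ (Y x1 μ1 y1 s ω) (Y x2 μ2 y2 s ω)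
  ν : Vec n → Measure (Vec n) → Measure (Vec m)
  invν : ∀ x μ, memP2 μ → IsInvariantMeasure f g x μ (ν x μ)
  uniqν : ∀ x μ, memP2 μ → ∀ ν' : Measure (Vec m), IsInvariantMeasure f g x μ ν' →
    ν' = ν x μ

/-- `Φ(x,μ,y) = ∫_0^∞ E[K(x, μ, Y_t^{x,μ,y})] dt`, the solution of the Poisson equation. -/
def PoissonPhi {n m d : ℕ} {Ω : Type} [mΩ : MeasurableSpace Ω] {P : Measure Ω}
    {ℱ : Filtration ℝ mΩ} (FS : FrozenSetting n m d Ω P ℱ)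
    (K : Vec n → Measure (Vec n) → Vec m → Vec n) (x : Vec n) (μ : Measure (Vec n))
    (y : Vec m) : Vec n :=
  ∫ t in Set.Ioi (0 : ℝ), (∫ ω, K x μ (FS.Y x μ y t ω) ∂P)

/-- Conditions A1–A4 for the coefficient `K` (relative to a frozen fast dynamics):
Lipschitz continuity, linear growth, the regularity condition A3 for `K, f, g`,
and the centering condition A4. -/
structure KAssumptions {n m d : ℕ} {Ω : Type} [mΩ : MeasurableSpace Ω] {P : Measure Ω}
    {ℱ : Filtration ℝ mΩ} (FS : FrozenSetting n m d Ω P ℱ)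
    (K : Vec n → Measure (Vec n) → Vec m → Vec n) where
  CK : ℝ
  CB : ℝ
  γ1 : ℝ
  hγ1 : γ1 ∈ Set.Ioc (0 : ℝ) 1
  lip : ∀ x1 x2 μ1 μ2 y1 y2, memP2 μ1 → memP2 μ2 →
    ‖K x1 μ1 y1 - K x2 μ2 y2‖ ≤ CK * (‖x1 - x2‖ + ‖y1 - y2‖ + W2 μ1 μ2)
  growth : ∀ x μ y, memP2 μ → ‖K x μ y‖ ≤ CK * (1 + ‖y‖)
  smoothK : Cb3 K CB
  lionsK : A3lions K CB γ1
  smoothf : Cb3 FS.f CB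
  lionsf : A3lions FS.f CB γ1
  smoothg : Cb3 FS.g CB
  lionsg : A3lions FS.g CB γ1
  centering : ∀ x μ, memP2 μ → ∫ y, K x μ y ∂(FS.ν x μ) = 0

end DiffApprox
namespace DiffApprox


/-! ### Wasserstein distance and measurability in time -/

theorem W2_map_le {k : ℕ} {Ω : Type} [MeasurableSpace Ω] (P : Measure Ω)
    {U V : Ω → Vec k} (hU : Measurable U) (hV : Measurable V) :
    W2 (P.map U) (P.map V) ≤ Real.sqrt (∫ ω, ‖U ω - V ω‖ ^ (2 : ℕ) ∂P) := by
  refine csInf_le ⟨0, ?_⟩ ⟨P.map (fun ω => (U ω, V ω)), ⟨?_, ?_⟩, ?_⟩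
  · rintro c ⟨π, -, rfl⟩
    exact Real.sqrt_nonneg _
  · rw [Measure.map_map measurable_fst (hU.prodMk hV)]; rfl
  · rw [Measure.map_map measurable_snd (hU.prodMk hV)]; rfl
  · rw [integral_map (hU.prodMk hV).aemeasurable]
    exact (Continuous.aestronglyMeasurable (by fun_prop))

theorem W2_self_map_le {k : ℕ} {Ω : Type} [MeasurableSpace Ω] (P : Measure Ω)
    {U : Ω → Vec k} (hU : Measurable U) : W2 (P.map U) (P.map U) ≤ 0 := by
  simpa using W2_map_le P hU hU

/-- continuous truncation -/
def trunc {k : ℕ} (N : ℕ) (x : Vec k) : Vec k := (max 0 (min 1 ((N : ℝ) + 1 - ‖x‖))) • x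

theorem trunc_cont {k : ℕ} (N : ℕ) : Continuous (trunc (k := k) N) := by
  unfold trunc; fun_prop

theorem trunc_norm {k : ℕ} (N : ℕ) (x : Vec k) : ‖trunc N x‖ ≤ N + 1 := by
  unfold trunc
  rw [norm_smul, Real.norm_of_nonneg (le_max_left _ _)]
  by_cases h : ‖x‖ ≤ N + 1
  · have : max 0 (min 1 ((N : ℝ) + 1 - ‖x‖)) ≤ 1 := by simp
    nlinarith [norm_nonneg x]
  · have : max 0 (min 1 ((N : ℝ) + 1 - ‖x‖)) = 0 := by
      apply max_eq_left
      exact (min_le_right _ _).trans (by linarith)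
    rw [this]; simp; positivity

theorem trunc_sub {k : ℕ} (N : ℕ) (x : Vec k) : ‖trunc N x - x‖ ≤ ‖x‖ := by
  have : trunc N x - x = ((max 0 (min 1 ((N : ℝ) + 1 - ‖x‖))) - 1) • x := by
    rw [sub_smul, one_smul]; rfl
  rw [this, norm_smul]
  have h1 : max 0 (min 1 ((N : ℝ) + 1 - ‖x‖)) ≤ 1 := by simp
  have h0 : 0 ≤ max 0 (min 1 ((N : ℝ) + 1 - ‖x‖)) := le_max_left _ _
  have : ‖max 0 (min 1 ((N : ℝ) + 1 - ‖x‖)) - 1‖ ≤ 1 := by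
    rw [Real.norm_eq_abs, abs_le]; constructor <;> linarith
  nlinarith [norm_nonneg x]

theorem trunc_eq {k : ℕ} (N : ℕ) (x : Vec k) (h : ‖x‖ ≤ N) : trunc N x = x := by
  unfold trunc
  rw [min_eq_left (by linarith)]; simp

theorem memP2_map_of_bdd {k : ℕ} {Ω : Type} [MeasurableSpace Ω] (P : Measure Ω)
    [IsProbabilityMeasure P] {U : Ω → Vec k} (hU : Measurable U) (c : ℝ)
    (hb : ∀ ω, ‖U ω‖ ≤ c) : memP2 (P.map U) := by
  refine ⟨Measure.isProbabilityMeasure_map hU.aemeasurable, ?_⟩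
  rw [lintegral_map (by fun_prop) hU]
  calc ∫⁻ ω, (‖U ω‖₊ : ℝ≥0∞) ^ (2 : ℕ) ∂P ≤ ∫⁻ ω, (ENNReal.ofReal c) ^ 2 ∂P := by
        apply lintegral_mono
        intro ω
        have : (‖U ω‖₊ : ℝ≥0∞) ≤ ENNReal.ofReal c := by
          change ‖U ω‖ₑ ≤ _
          rw [← ofReal_norm]
          exact ENNReal.ofReal_le_ofReal (hb ω)
        dsimp only
        gcongr
    _ < ⊤ := by simp

theorem memP2_integrable {k : ℕ} {Ω : Type} [MeasurableSpace Ω] (P : Measure Ω)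
    {U : Ω → Vec k} (hU : Measurable U) (h : memP2 (P.map U)) :
    Integrable (fun ω => ‖U ω‖ ^ (2 : ℕ)) P := by
  have h2 := h.2
  rw [lintegral_map (by fun_prop) hU] at h2
  refine ⟨(hU.norm.pow_const 2).aestronglyMeasurable, ?_⟩
  unfold HasFiniteIntegral
  refine lt_of_le_of_lt (lintegral_mono fun ω => ?_) h2
  rw [enorm_pow, enorm_norm]; rfl

/-- Lipschitz property of a coefficient. -/
def LipC {n m : ℕ} {E : Type*} [NormedAddCommGroup E]
    (F : Vec n → Measure (Vec n) → Vec m → E) (CL : ℝ) : Prop :=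
  ∀ x1 x2 μ1 μ2 y1 y2, memP2 μ1 → memP2 μ2 →
    ‖F x1 μ1 y1 - F x2 μ2 y2‖ ≤ CL * (‖x1 - x2‖ + ‖y1 - y2‖ + W2 μ1 μ2)

theorem W2_nonneg {k : ℕ} (μ ν : Measure (Vec k)) : 0 ≤ W2 μ ν := by
  apply Real.sInf_nonneg
  rintro c ⟨π, -, rfl⟩
  exact Real.sqrt_nonneg _

theorem LipC.abs {n m : ℕ} {E : Type*} [NormedAddCommGroup E]
    {F : Vec n → Measure (Vec n) → Vec m → E} {CL : ℝ} (h : LipC F CL) : LipC F |CL| := by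
  intro x1 x2 μ1 μ2 y1 y2 h1 h2
  refine (h x1 x2 μ1 μ2 y1 y2 h1 h2).trans ?_
  have := W2_nonneg μ1 μ2
  gcongr
  exact le_abs_self _

/-- coefficients along continuous paths are measurable in time. -/
theorem LipC.measurable_path {n m : ℕ} {E : Type*} [NormedAddCommGroup E]
    {F : Vec n → Measure (Vec n) → Vec m → E} {CL : ℝ} (hF : LipC F CL)
    {Ω : Type} [MeasurableSpace Ω] (P : Measure Ω) [IsProbabilityMeasure P]
    {X : ℝ → Ω → Vec n} (hX : ∀ t, Measurable (X t)) (hc : ∀ ω, Continuous fun t => X t ω)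
    (hP2 : ∀ t, 0 ≤ t → memP2 (P.map (X t)))
    {x : ℝ → Vec n} {y : ℝ → Vec m} (hx : Continuous x) (hy : Continuous y) (t : ℝ) :
    AEStronglyMeasurable (fun s => F (x s) (P.map (X s)) (y s))
      (volume.restrict (Set.Ioc 0 t)) := by
  replace hF := hF.abs
  set c := |CL|
  have hc0 : 0 ≤ c := abs_nonneg _
  have mN : ∀ N s, Measurable (fun ω => trunc N (X s ω)) := fun N s =>
    (trunc_cont N).measurable.comp (hX s)
  have pN : ∀ N s, memP2 (P.map (fun ω => trunc N (X s ω))) := fun N s =>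
    memP2_map_of_bdd P (mN N s) (N + 1) fun ω => trunc_norm _ _
  have key : ∀ N : ℕ, Continuous
      (fun s => F (x s) (P.map (fun ω => trunc N (X s ω))) (y s)) := by
    intro N
    rw [continuous_iff_continuousAt]
    intro s
    rw [ContinuousAt, tendsto_iff_norm_sub_tendsto_zero]
    have h1 : Tendsto (fun r => c * (‖x r - x s‖ + ‖y r - y s‖ +
        Real.sqrt (∫ ω, ‖trunc N (X r ω) - trunc N (X s ω)‖ ^ (2 : ℕ) ∂P))) (𝓝 s) (𝓝 0) := by
      have a1 : Tendsto (fun r => ‖x r - x s‖) (𝓝 s) (𝓝 0) :=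
        tendsto_iff_norm_sub_tendsto_zero.1 hx.continuousAt
      have a2 : Tendsto (fun r => ‖y r - y s‖) (𝓝 s) (𝓝 0) :=
        tendsto_iff_norm_sub_tendsto_zero.1 hy.continuousAt
      have a3 : Tendsto (fun r => ∫ ω, ‖trunc N (X r ω) - trunc N (X s ω)‖ ^ (2 : ℕ) ∂P)
          (𝓝 s) (𝓝 (∫ ω, ‖trunc N (X s ω) - trunc N (X s ω)‖ ^ (2 : ℕ) ∂P)) := by
        apply tendsto_integral_filter_of_dominated_convergence
          (bound := fun _ => (2 * ((N : ℝ) + 1)) ^ 2)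
        · exact Eventually.of_forall fun r =>
            (((mN N r).sub (mN N s)).norm.pow_const 2).aestronglyMeasurable
        · refine Eventually.of_forall fun r => Eventually.of_forall fun ω => ?_
          rw [norm_pow, norm_norm]
          have := trunc_norm N (X r ω)
          have := trunc_norm N (X s ω)
          have := norm_sub_le (trunc N (X r ω)) (trunc N (X s ω))
          gcongr
          linarith
        · exact integrable_const _
        · refine Eventually.of_forall fun ω => ?_
          have : Continuous fun r => ‖trunc N (X r ω) - trunc N (X s ω)‖ ^ (2 : ℕ) :=
            ((((trunc_cont N).comp (hc ω)).sub continuous_const).norm).pow 2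
          exact this.tendsto s
      have a4 := (a1.add a2).add (a3.sqrt)
      simpa using a4.const_mul c
    refine squeeze_zero (fun _ => norm_nonneg _) (fun r => ?_) h1
    refine (hF _ _ _ _ _ _ (pN N r) (pN N s)).trans ?_
    gcongr
    exact W2_map_le P (mN N r) (mN N s)
  refine aestronglyMeasurable_of_tendsto_ae atTop
    (fun N : ℕ => (key N).aestronglyMeasurable) ?_
  refine (ae_restrict_mem measurableSet_Ioc).mono fun s hs => ?_
  have hs0 : 0 ≤ s := hs.1.le
  rw [tendsto_iff_norm_sub_tendsto_zero]
  have a3 : Tendsto (fun N : ℕ => ∫ ω, ‖trunc N (X s ω) - X s ω‖ ^ (2 : ℕ) ∂P)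
      atTop (𝓝 (∫ ω, (0 : ℝ) ∂P)) := by
    apply tendsto_integral_of_dominated_convergence (bound := fun ω => ‖X s ω‖ ^ (2 : ℕ))
    · exact fun N => (((mN N s).sub (hX s)).norm.pow_const 2).aestronglyMeasurable
    · exact memP2_integrable P (hX s) (hP2 s hs0)
    · refine fun N => Eventually.of_forall fun ω => ?_
      rw [norm_pow, norm_norm]
      gcongr
      exact trunc_sub _ _
    · refine Eventually.of_forall fun ω => ?_
      apply tendsto_const_nhds.congr'
      obtain ⟨N0, hN0⟩ := exists_nat_ge ‖X s ω‖
      filter_upwards [eventually_ge_atTop N0] with N hN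
      rw [trunc_eq N _ (hN0.trans (by exact_mod_cast hN))]; simp
  have a4 : Tendsto (fun N : ℕ => c * (‖x s - x s‖ + ‖y s - y s‖ +
      Real.sqrt (∫ ω, ‖trunc N (X s ω) - X s ω‖ ^ (2 : ℕ) ∂P))) atTop (𝓝 0) := by
    have := (a3.sqrt).const_mul c
    simpa using this
  refine squeeze_zero (fun _ => norm_nonneg _) (fun N => ?_) a4
  refine (hF _ _ _ _ _ _ (pN N s) (hP2 s hs0)).trans ?_
  gcongr
  exact W2_map_le P (mN N s) (hX s)

theorem SA13.lipb {n m d : ℕ} {C : Coeffs n m d} (S : SA13 C) : LipC C.b S.CL :=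
  fun x1 x2 μ1 μ2 y1 y2 h1 h2 => by
    have := S.lipSlow x1 x2 μ1 μ2 y1 y2 h1 h2
    linarith [norm_nonneg (C.K x1 μ1 y1 - C.K x2 μ2 y2), norm_nonneg (C.σ x1 μ1 y1 - C.σ x2 μ2 y2)]
theorem SA13.lipK {n m d : ℕ} {C : Coeffs n m d} (S : SA13 C) : LipC C.K S.CL :=
  fun x1 x2 μ1 μ2 y1 y2 h1 h2 => by
    have := S.lipSlow x1 x2 μ1 μ2 y1 y2 h1 h2
    linarith [norm_nonneg (C.b x1 μ1 y1 - C.b x2 μ2 y2), norm_nonneg (C.σ x1 μ1 y1 - C.σ x2 μ2 y2)]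
theorem SA13.lipσ {n m d : ℕ} {C : Coeffs n m d} (S : SA13 C) : LipC C.σ S.CL :=
  fun x1 x2 μ1 μ2 y1 y2 h1 h2 => by
    have := S.lipSlow x1 x2 μ1 μ2 y1 y2 h1 h2
    linarith [norm_nonneg (C.b x1 μ1 y1 - C.b x2 μ2 y2), norm_nonneg (C.K x1 μ1 y1 - C.K x2 μ2 y2)]
theorem SA13.lipf {n m d : ℕ} {C : Coeffs n m d} (S : SA13 C) : LipC C.f S.CL :=
  fun x1 x2 μ1 μ2 y1 y2 h1 h2 => by
    have := S.lipFast x1 x2 μ1 μ2 y1 y2 h1 h2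
    linarith [norm_nonneg (C.h x1 μ1 y1 - C.h x2 μ2 y2), norm_nonneg (C.g x1 μ1 y1 - C.g x2 μ2 y2)]
theorem SA13.liph {n m d : ℕ} {C : Coeffs n m d} (S : SA13 C) : LipC C.h S.CL :=
  fun x1 x2 μ1 μ2 y1 y2 h1 h2 => by
    have := S.lipFast x1 x2 μ1 μ2 y1 y2 h1 h2
    linarith [norm_nonneg (C.f x1 μ1 y1 - C.f x2 μ2 y2), norm_nonneg (C.g x1 μ1 y1 - C.g x2 μ2 y2)]
theorem SA13.lipg {n m d : ℕ} {C : Coeffs n m d} (S : SA13 C) : LipC C.g S.CL :=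
  fun x1 x2 μ1 μ2 y1 y2 h1 h2 => by
    have := S.lipFast x1 x2 μ1 μ2 y1 y2 h1 h2
    linarith [norm_nonneg (C.f x1 μ1 y1 - C.f x2 μ2 y2), norm_nonneg (C.h x1 μ1 y1 - C.h x2 μ2 y2)]


/-! ### Calculus of test functions -/

theorem gradx_contDiff {n m : ℕ} {φ : Vec n → Vec m → ℝ}
    (h : ContDiff ℝ 2 (Function.uncurry φ)) :
    ContDiff ℝ 1 (fun z : Vec n × Vec m => gradient (fun x' => φ x' z.2) z.1) := by
  have e : (fun z : Vec n × Vec m => gradient (fun x' => φ x' z.2) z.1) = fun z =>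
      (InnerProductSpace.toDual ℝ (Vec n)).symm
        ((fderiv ℝ (Function.uncurry φ) z).comp (ContinuousLinearMap.inl ℝ (Vec n) (Vec m))) := by
    ext1 z
    unfold gradient
    congr 1
    have h1 : HasFDerivAt (Function.uncurry φ) (fderiv ℝ (Function.uncurry φ) z) (z.1, z.2) :=
      (h.differentiable (by norm_num) z).hasFDerivAt
    exact (HasFDerivAt.comp (f := fun e => (e, z.2)) z.1 h1 (hasFDerivAt_prodMk_left z.1 z.2)).fderiv
  rw [e]
  have h2 : ContDiff ℝ 1 (fderiv ℝ (Function.uncurry φ)) := h.fderiv_right (by norm_num)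
  exact (InnerProductSpace.toDual ℝ (Vec n)).symm.toContinuousLinearEquiv.contDiff.comp
    (h2.clm_comp contDiff_const)

theorem grady_contDiff {n m : ℕ} {φ : Vec n → Vec m → ℝ}
    (h : ContDiff ℝ 2 (Function.uncurry φ)) :
    ContDiff ℝ 1 (fun z : Vec n × Vec m => gradient (φ z.1) z.2) := by
  have e : (fun z : Vec n × Vec m => gradient (φ z.1) z.2) = fun z =>
      (InnerProductSpace.toDual ℝ (Vec m)).symm
        ((fderiv ℝ (Function.uncurry φ) z).comp (ContinuousLinearMap.inr ℝ (Vec n) (Vec m))) := by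
    ext1 z
    unfold gradient
    congr 1
    have h1 : HasFDerivAt (Function.uncurry φ) (fderiv ℝ (Function.uncurry φ) z) (z.1, z.2) :=
      (h.differentiable (by norm_num) z).hasFDerivAt
    exact (h1.comp z.2 (hasFDerivAt_prodMk_right z.1 z.2)).fderiv
  rw [e]
  have h2 : ContDiff ℝ 1 (fderiv ℝ (Function.uncurry φ)) := h.fderiv_right (by norm_num)
  exact (InnerProductSpace.toDual ℝ (Vec m)).symm.toContinuousLinearEquiv.contDiff.comp
    (h2.clm_comp contDiff_const)

theorem hessx_cont {n m : ℕ} {φ : Vec n → Vec m → ℝ}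
    (h : ContDiff ℝ 2 (Function.uncurry φ)) :
    Continuous (fun z : Vec n × Vec m => hess (fun x' => φ x' z.2) z.1) := by
  have h1 := gradx_contDiff h
  have e : (fun z : Vec n × Vec m => hess (fun x' => φ x' z.2) z.1) = fun z =>
      (fderiv ℝ (fun z : Vec n × Vec m => gradient (fun x' => φ x' z.2) z.1) z).comp
        (ContinuousLinearMap.inl ℝ (Vec n) (Vec m)) := by
    ext1 z
    have h2 : HasFDerivAt (fun z : Vec n × Vec m => gradient (fun x' => φ x' z.2) z.1) 
      (fderiv ℝ (fun z : Vec n × Vec m => gradient (fun x' => φ x' z.2) z.1) z) (z.1, z.2) :=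
      (h1.differentiable (by norm_num) z).hasFDerivAt
    exact (HasFDerivAt.comp (f := fun e => (e, z.2)) z.1 h2 (hasFDerivAt_prodMk_left z.1 z.2)).fderiv
  rw [e]
  exact (h1.continuous_fderiv (by norm_num)).clm_comp continuous_const

theorem hessy_cont {n m : ℕ} {φ : Vec n → Vec m → ℝ}
    (h : ContDiff ℝ 2 (Function.uncurry φ)) :
    Continuous (fun z : Vec n × Vec m => hess (φ z.1) z.2) := by
  have h1 := grady_contDiff h
  have e : (fun z : Vec n × Vec m => hess (φ z.1) z.2) = fun z =>
      (fderiv ℝ (fun z : Vec n × Vec m => gradient (φ z.1) z.2) z).comp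
        (ContinuousLinearMap.inr ℝ (Vec n) (Vec m)) := by
    ext1 z
    have h2 : HasFDerivAt (fun z : Vec n × Vec m => gradient (φ z.1) z.2) 
      (fderiv ℝ (fun z : Vec n × Vec m => gradient (φ z.1) z.2) z) (z.1, z.2) :=
      (h1.differentiable (by norm_num) z).hasFDerivAt
    exact (h2.comp z.2 (hasFDerivAt_prodMk_right z.1 z.2)).fderiv
  rw [e]
  exact (h1.continuous_fderiv (by norm_num)).clm_comp continuous_const

theorem hessxy_cont {n m : ℕ} {φ : Vec n → Vec m → ℝ}
    (h : ContDiff ℝ 2 (Function.uncurry φ)) :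
    Continuous (fun z : Vec n × Vec m => hessMixed φ z.1 z.2) := by
  have h1 := grady_contDiff h
  have e : (fun z : Vec n × Vec m => hessMixed φ z.1 z.2) = fun z =>
      (fderiv ℝ (fun z : Vec n × Vec m => gradient (φ z.1) z.2) z).comp
        (ContinuousLinearMap.inl ℝ (Vec n) (Vec m)) := by
    ext1 z
    have h2 : HasFDerivAt (fun z : Vec n × Vec m => gradient (φ z.1) z.2) 
      (fderiv ℝ (fun z : Vec n × Vec m => gradient (φ z.1) z.2) z) (z.1, z.2) :=
      (h1.differentiable (by norm_num) z).hasFDerivAt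
    exact (HasFDerivAt.comp (f := fun e => (e, z.2)) z.1 h2 (hasFDerivAt_prodMk_left z.1 z.2)).fderiv
  rw [e]
  exact (h1.continuous_fderiv (by norm_num)).clm_comp continuous_const

/-- trace as a continuous linear map -/
def trL (k : ℕ) : (Vec k →L[ℝ] Vec k) →L[ℝ] ℝ :=
  LinearMap.toContinuousLinearMap
    { toFun := trCLM
      map_add' := fun A B => by simp [trCLM]
      map_smul' := fun c A => by simp [trCLM] }

theorem trL_apply {k : ℕ} (A : Vec k →L[ℝ] Vec k) : trL k A = trCLM A := rfl

theorem trCLM_le {k : ℕ} (A : Vec k →L[ℝ] Vec k) : |trCLM A| ≤ ‖trL k‖ * ‖A‖ := by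
  rw [← trL_apply, ← Real.norm_eq_abs]; exact (trL k).le_opNorm A

theorem norm_adj {k l : ℕ} (A : Mat k l) : ‖adj A‖ = ‖A‖ := by
  unfold adj; exact LinearIsometryEquiv.norm_map _ A

theorem trCLM_comp3_le {k l j : ℕ} (A : Mat k l) (B : Mat j l) (D : Mat j k) :
    |trCLM ((A.comp (adj B)).comp D)| ≤ ‖trL k‖ * (‖A‖ * ‖B‖ * ‖D‖) := by
  refine (trCLM_le _).trans ?_
  gcongr
  refine (ContinuousLinearMap.opNorm_comp_le _ _).trans ?_
  gcongr
  refine (ContinuousLinearMap.opNorm_comp_le _ _).trans ?_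
  rw [norm_adj]

theorem adj_cont {k l : ℕ} : Continuous (adj (k := k) (l := l)) := by
  unfold adj
  exact LinearIsometryEquiv.continuous _

/-! ### Radial functions -/

theorem grad_radial {k : ℕ} {Φ : ℝ → ℝ} (h : ContDiff ℝ 2 Φ) :
    gradient (fun y : Vec k => Φ (‖y‖ ^ 2)) = fun y => (2 * deriv Φ (‖y‖ ^ 2)) • y := by
  ext1 y
  apply HasGradientAt.gradient
  rw [hasGradientAt_iff_hasFDerivAt]
  have h1 : HasDerivAt Φ (deriv Φ (‖y‖ ^ 2)) (‖y‖ ^ 2) :=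
    (h.differentiable (by norm_num) _).hasDerivAt
  have h2 := h1.comp_hasFDerivAt y (hasStrictFDerivAt_norm_sq y).hasFDerivAt
  refine HasFDerivAt.congr_fderiv (f := fun y : Vec k => Φ (‖y‖ ^ 2)) h2 ?_
  ext v
  simp
  ring

theorem hess_radial {k : ℕ} {Φ : ℝ → ℝ} (h : ContDiff ℝ 2 Φ) (y : Vec k) :
    hess (fun y : Vec k => Φ (‖y‖ ^ 2)) y =
      (2 * deriv Φ (‖y‖ ^ 2)) • ContinuousLinearMap.id ℝ (Vec k) +
        (4 * deriv (deriv Φ) (‖y‖ ^ 2)) • outer y y := by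
  unfold hess
  rw [grad_radial h]
  have h1 : HasDerivAt (deriv Φ) (deriv (deriv Φ) (‖y‖ ^ 2)) (‖y‖ ^ 2) := by
    have : ContDiff ℝ 1 (deriv Φ) := by
      have := (contDiff_succ_iff_deriv (n := 1) (f := Φ)).1 (by rw [one_add_one_eq_two]; exact h)
      exact this.2.2
    exact (this.differentiable (by norm_num) _).hasDerivAt
  have h2 := (h1.comp_hasFDerivAt y (hasStrictFDerivAt_norm_sq y).hasFDerivAt).const_mul 2
  have h3 := h2.smul (hasFDerivAt_id y)
  refine HasFDerivAt.fderiv (h3.congr_fderiv ?_)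
  ext1 v
  simp [outer, smul_smul]
  ring_nf

theorem trCLM_outer {k : ℕ} (A : Mat k k) (y : Vec k) :
    trCLM (A.comp (outer y y)) = ⟪y, A y⟫ := by
  have : A.comp (outer y y) = (innerSL ℝ y).smulRight (A y) := by
    ext1 v; simp [outer]
  rw [this]
  unfold trCLM
  exact LinearMap.trace_smulRight ((innerSL ℝ y : Vec k →L[ℝ] ℝ) : Vec k →ₗ[ℝ] ℝ) (A y)

theorem inner_gadj {k l : ℕ} (g : Mat k l) (y : Vec k) :
    ⟪y, (g.comp (adj g)) y⟫ = ‖adj g y‖ ^ 2 := by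
  rw [ContinuousLinearMap.comp_apply, ← ContinuousLinearMap.adjoint_inner_left]
  exact real_inner_self_eq_norm_sq _


/-! ### The generator along paths -/

theorem W2_self {k : ℕ} (μ : Measure (Vec k)) : W2 μ μ ≤ 0 := by
  have := W2_self_map_le μ (U := id) measurable_id
  simpa using this

theorem LipC.fixed {n m : ℕ} {E : Type*} [NormedAddCommGroup E]
    {F : Vec n → Measure (Vec n) → Vec m → E} {CL : ℝ} (h : LipC F CL) (x μ y)
    (hμ : memP2 μ) : ‖F x μ y‖ ≤ ‖F 0 μ 0‖ + |CL| * (‖x‖ + ‖y‖) := by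
  have h1 := h.abs x 0 μ μ y 0 hμ hμ
  have h2 := W2_self μ
  have h3 : |CL| * (‖x - 0‖ + ‖y - 0‖ + W2 μ μ) ≤ |CL| * (‖x‖ + ‖y‖) := by
    refine mul_le_mul_of_nonneg_left ?_ (abs_nonneg _)
    simp only [sub_zero]; linarith
  have h4 := norm_sub_norm_le (F x μ y) (F 0 μ 0)
  linarith

/-- a uniform linear growth constant -/
def SA13.gr {n m d : ℕ} {C : Coeffs n m d} (S : SA13 C) : ℝ := 2 * |S.CG|

theorem SA13.gr_nonneg {n m d : ℕ} {C : Coeffs n m d} (S : SA13 C) : 0 ≤ S.gr := by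
  unfold SA13.gr; positivity

theorem SA13.growth_all {n m d : ℕ} {C : Coeffs n m d} (S : SA13 C) (x μ y) (hμ : memP2 μ) :
    ‖C.K x μ y‖ ≤ S.gr * (1 + ‖y‖) ∧ ‖C.f x μ y‖ ≤ S.gr * (1 + ‖y‖) ∧
    ‖C.h x μ y‖ ≤ S.gr * (1 + ‖y‖) ∧ ‖C.σ x μ y‖ ≤ S.gr * (1 + ‖y‖) ∧
    ‖C.g x μ y‖ ≤ S.gr * (1 + ‖y‖) := by
  have h1 := S.growth x μ y hμ
  have h2 := S.growthg x μ y hμ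
  have a1 := norm_nonneg (C.K x μ y)
  have a2 := norm_nonneg (C.f x μ y)
  have a3 := norm_nonneg (C.h x μ y)
  have a4 := norm_nonneg (C.σ x μ y)
  have b1 : S.CG * (1 + ‖y‖) ≤ S.gr * (1 + ‖y‖) := by
    unfold SA13.gr
    gcongr
    linarith [le_abs_self S.CG, abs_nonneg S.CG]
  have b2 : ‖y‖ ^ S.ς ≤ 1 + ‖y‖ := by
    rcases le_total ‖y‖ 1 with h | h
    · have := Real.rpow_le_one (norm_nonneg y) h S.hς.1.le
      linarith [norm_nonneg y]
    · have := Real.rpow_le_rpow_of_exponent_le h S.hς.2.le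
      rw [Real.rpow_one] at this
      linarith
  have b3 : S.CG * (1 + ‖y‖ ^ S.ς) ≤ S.gr * (1 + ‖y‖) := by
    have : S.CG * (1 + ‖y‖ ^ S.ς) ≤ |S.CG| * (1 + (1 + ‖y‖)) := by
      have : 0 ≤ ‖y‖ ^ S.ς := Real.rpow_nonneg (norm_nonneg y) _
      gcongr
      exact le_abs_self _
    unfold SA13.gr
    nlinarith [abs_nonneg S.CG, norm_nonneg y]
  refine ⟨?_, ?_, ?_, ?_, ?_⟩ <;> linarith

theorem int_of_bd {F : ℝ → ℝ} {t : ℝ}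
    (hm : AEStronglyMeasurable F (volume.restrict (Set.Ioc 0 t)))
    {B : ℝ → ℝ} (hB : Continuous B) (h : ∀ s, 0 ≤ s → |F s| ≤ B s) :
    IntegrableOn F (Set.Ioc 0 t) := by
  have h1 : IntegrableOn B (Set.Ioc 0 t) :=
    (hB.integrableOn_Icc (a := 0) (b := t)).mono_set Set.Ioc_subset_Icc_self
  refine Integrable.mono' h1 hm ?_
  exact (ae_restrict_mem measurableSet_Ioc).mono fun s hs => h s hs.1.le

theorem aesm_tr {α : Type*} [MeasurableSpace α] {μ : Measure α} {k l j : ℕ}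
    {A : α → Mat k l} {B : α → Mat j l} {D : α → Mat j k}
    (hA : AEStronglyMeasurable A μ) (hB : AEStronglyMeasurable B μ)
    (hD : AEStronglyMeasurable D μ) :
    AEStronglyMeasurable (fun a => trCLM (((A a).comp (adj (B a))).comp (D a))) μ := by
  have hc : Continuous (fun z : (Mat k l × Mat j l) × Mat j k =>
      trCLM ((z.1.1.comp (adj z.1.2)).comp z.2)) := by
    simp_rw [← trL_apply]
    refine (trL k).continuous.comp ?_
    exact ((continuous_fst.comp continuous_fst).clm_comp
      (adj_cont.comp (continuous_snd.comp continuous_fst))).clm_comp continuous_snd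
  exact hc.comp_aestronglyMeasurable ((hA.prodMk hB).prodMk hD)

theorem genSF_sub_integrable {n m d : ℕ} {C : Coeffs n m d} (SAh : SA13 C) {ε : ℝ}
    {Ω : Type} [mΩ : MeasurableSpace Ω] {P : Measure Ω} [IsProbabilityMeasure P]
    {ℱ : Filtration ℝ mΩ} {X : ℝ → Ω → Vec n} {Y : ℝ → Ω → Vec m} {ξ : Ω → Vec n}
    {ζ : Ω → Vec m} (S : IsSFSolution C ε P ℱ X Y ξ ζ) {φ : Vec n → Vec m → ℝ}
    (hφ : ContDiff ℝ 2 (Function.uncurry φ)) (ω : Ω) (t : ℝ) :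
    IntegrableOn (fun s => genSF C ε (P.map (X s)) φ (X s ω) (Y s ω) -
      ⟪C.b 0 (P.map (X s)) 0, gradient (fun x' => φ x' (Y s ω)) (X s ω)⟫) (Set.Ioc 0 t) := by
  have hx := S.contX ω
  have hy := S.contY ω
  have hz : Continuous fun s => (X s ω, Y s ω) := hx.prodMk hy
  have cGx : Continuous fun s => gradient (fun x' => φ x' (Y s ω)) (X s ω) :=
    (gradx_contDiff hφ).continuous.comp hz
  have cGy : Continuous fun s => gradient (φ (X s ω)) (Y s ω) :=
    (grady_contDiff hφ).continuous.comp hz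
  have cHx : Continuous fun s => hess (fun x' => φ x' (Y s ω)) (X s ω) := (hessx_cont hφ).comp hz
  have cHy : Continuous fun s => hess (φ (X s ω)) (Y s ω) := (hessy_cont hφ).comp hz
  have cHm : Continuous fun s => hessMixed φ (X s ω) (Y s ω) := (hessxy_cont hφ).comp hz
  have mb := SAh.lipb.measurable_path P S.measX S.contX S.lawP2X hx hy t
  have mb0 := SAh.lipb.measurable_path P S.measX S.contX S.lawP2X
    (x := fun _ => 0) (y := fun _ => 0) continuous_const continuous_const t
  have mK := SAh.lipK.measurable_path P S.measX S.contX S.lawP2X hx hy t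
  have mσ := SAh.lipσ.measurable_path P S.measX S.contX S.lawP2X hx hy t
  have mf := SAh.lipf.measurable_path P S.measX S.contX S.lawP2X hx hy t
  have mh := SAh.liph.measurable_path P S.measX S.contX S.lawP2X hx hy t
  have mg := SAh.lipg.measurable_path P S.measX S.contX S.lawP2X hx hy t
  have G := fun s (hs : 0 ≤ s) => SAh.growth_all (X s ω) (P.map (X s)) (Y s ω) (S.lawP2X s hs)
  have hgr := SAh.gr_nonneg
  have i1 : IntegrableOn (fun s => ⟪C.b (X s ω) (P.map (X s)) (Y s ω) - C.b 0 (P.map (X s)) 0,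
      gradient (fun x' => φ x' (Y s ω)) (X s ω)⟫) (Set.Ioc 0 t) := by
    refine int_of_bd ((mb.sub mb0).inner cGx.aestronglyMeasurable)
      (B := fun s => |SAh.CL| * (‖X s ω‖ + ‖Y s ω‖) *
        ‖gradient (fun x' => φ x' (Y s ω)) (X s ω)‖) (by fun_prop) fun s hs => ?_
    refine (abs_real_inner_le_norm _ _).trans ?_
    gcongr
    have hμ := S.lawP2X s hs
    refine (SAh.lipb.abs _ _ _ _ _ _ hμ hμ).trans ?_
    have := W2_self (P.map (X s))
    refine mul_le_mul_of_nonneg_left ?_ (abs_nonneg _)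
    simp only [sub_zero]; linarith
  have i2 : IntegrableOn (fun s => ⟪C.K (X s ω) (P.map (X s)) (Y s ω),
      gradient (fun x' => φ x' (Y s ω)) (X s ω)⟫) (Set.Ioc 0 t) := by
    refine int_of_bd (mK.inner cGx.aestronglyMeasurable)
      (B := fun s => SAh.gr * (1 + ‖Y s ω‖) *
        ‖gradient (fun x' => φ x' (Y s ω)) (X s ω)‖) (by fun_prop) fun s hs => ?_
    refine (abs_real_inner_le_norm _ _).trans ?_
    gcongr
    exact (G s hs).1
  have i3 : IntegrableOn (fun s => ⟪C.f (X s ω) (P.map (X s)) (Y s ω),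
      gradient (φ (X s ω)) (Y s ω)⟫) (Set.Ioc 0 t) := by
    refine int_of_bd (mf.inner cGy.aestronglyMeasurable)
      (B := fun s => SAh.gr * (1 + ‖Y s ω‖) *
        ‖gradient (φ (X s ω)) (Y s ω)‖) (by fun_prop) fun s hs => ?_
    refine (abs_real_inner_le_norm _ _).trans ?_
    gcongr
    exact (G s hs).2.1
  have i4 : IntegrableOn (fun s => ⟪C.h (X s ω) (P.map (X s)) (Y s ω),
      gradient (φ (X s ω)) (Y s ω)⟫) (Set.Ioc 0 t) := by
    refine int_of_bd (mh.inner cGy.aestronglyMeasurable)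
      (B := fun s => SAh.gr * (1 + ‖Y s ω‖) *
        ‖gradient (φ (X s ω)) (Y s ω)‖) (by fun_prop) fun s hs => ?_
    refine (abs_real_inner_le_norm _ _).trans ?_
    gcongr
    exact (G s hs).2.2.1
  have i5 : IntegrableOn (fun s => trCLM (((C.σ (X s ω) (P.map (X s)) (Y s ω)).comp
      (adj (C.σ (X s ω) (P.map (X s)) (Y s ω)))).comp
      (hess (fun x' => φ x' (Y s ω)) (X s ω)))) (Set.Ioc 0 t) := by
    refine int_of_bd (aesm_tr mσ mσ cHx.aestronglyMeasurable)
      (B := fun s => ‖trL n‖ * ((SAh.gr * (1 + ‖Y s ω‖)) * (SAh.gr * (1 + ‖Y s ω‖)) *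
        ‖hess (fun x' => φ x' (Y s ω)) (X s ω)‖)) (by fun_prop) fun s hs => ?_
    refine (trCLM_comp3_le _ _ _).trans ?_
    have := (G s hs).2.2.2.1
    gcongr
  have i6 : IntegrableOn (fun s => trCLM (((C.g (X s ω) (P.map (X s)) (Y s ω)).comp
      (adj (C.g (X s ω) (P.map (X s)) (Y s ω)))).comp
      (hess (φ (X s ω)) (Y s ω)))) (Set.Ioc 0 t) := by
    refine int_of_bd (aesm_tr mg mg cHy.aestronglyMeasurable)
      (B := fun s => ‖trL m‖ * ((SAh.gr * (1 + ‖Y s ω‖)) * (SAh.gr * (1 + ‖Y s ω‖)) *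
        ‖hess (φ (X s ω)) (Y s ω)‖)) (by fun_prop) fun s hs => ?_
    refine (trCLM_comp3_le _ _ _).trans ?_
    have := (G s hs).2.2.2.2
    gcongr
  have i7 : IntegrableOn (fun s => trCLM (((C.σ (X s ω) (P.map (X s)) (Y s ω)).comp
      (adj (C.g (X s ω) (P.map (X s)) (Y s ω)))).comp
      (hessMixed φ (X s ω) (Y s ω)))) (Set.Ioc 0 t) := by
    refine int_of_bd (aesm_tr mσ mg cHm.aestronglyMeasurable)
      (B := fun s => ‖trL n‖ * ((SAh.gr * (1 + ‖Y s ω‖)) * (SAh.gr * (1 + ‖Y s ω‖)) *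
        ‖hessMixed φ (X s ω) (Y s ω)‖)) (by fun_prop) fun s hs => ?_
    refine (trCLM_comp3_le _ _ _).trans ?_
    have h1 := (G s hs).2.2.2.2
    have h2 := (G s hs).2.2.2.1
    gcongr
  have tot := (((((i1.add (i2.const_mul (Real.sqrt ε)⁻¹)).add (i3.const_mul ε⁻¹)).add
    (i4.const_mul (Real.sqrt ε)⁻¹)).add (i5.const_mul (1 / 2))).add
    (i6.const_mul (1 / (2 * ε)))).add (i7.const_mul (Real.sqrt ε)⁻¹)
  refine tot.congr (Eventually.of_forall fun s => ?_)
  simp only [genSF, Pi.add_apply, inner_add_left, inner_sub_left, real_inner_smul_left]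
  ring


/-! ### Cutoff functions -/

/-- one-dimensional cutoff: `1` on `(-∞,1]`, `0` on `[2,∞)`. -/
def tau (q : ℝ) : ℝ := Real.smoothTransition (2 - q)

theorem tau_contDiff : ContDiff ℝ 2 tau :=
  (Real.smoothTransition.contDiff (n := 2)).comp (contDiff_const.sub contDiff_id)
theorem tau_nonneg (q : ℝ) : 0 ≤ tau q := Real.smoothTransition.nonneg _
theorem tau_le_one (q : ℝ) : tau q ≤ 1 := Real.smoothTransition.le_one _
theorem tau_one {q : ℝ} (h : q ≤ 1) : tau q = 1 :=
  Real.smoothTransition.one_of_one_le (by linarith)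
theorem tau_zero {q : ℝ} (h : 2 ≤ q) : tau q = 0 :=
  Real.smoothTransition.zero_of_nonpos (by linarith)
theorem tau_anti : Antitone tau := fun a b h =>
  Real.smoothTransition.monotone (by linarith)

theorem tau_ev_one {q : ℝ} (h : q < 1) : tau =ᶠ[𝓝 q] fun _ => 1 := by
  filter_upwards [Iio_mem_nhds h] with r hr
  exact tau_one (le_of_lt hr)

theorem tau_ev_zero {q : ℝ} (h : 2 < q) : tau =ᶠ[𝓝 q] fun _ => 0 := by
  filter_upwards [Ioi_mem_nhds h] with r hr
  exact tau_zero (le_of_lt hr)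

theorem tau_deriv_one {q : ℝ} (h : q < 1) : deriv tau q = 0 ∧ deriv (deriv tau) q = 0 := by
  have h1 := (tau_ev_one h).deriv
  constructor
  · rw [h1.eq_of_nhds]; simp
  · rw [h1.deriv_eq]; simp

theorem tau_deriv_zero {q : ℝ} (h : 2 < q) : deriv tau q = 0 ∧ deriv (deriv tau) q = 0 := by
  have h1 := (tau_ev_zero h).deriv
  constructor
  · rw [h1.eq_of_nhds]; simp
  · rw [h1.deriv_eq]; simp

theorem contDiff_two_deriv {f : ℝ → ℝ} (h : ContDiff ℝ 2 f) : ContDiff ℝ 1 (deriv f) :=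
  ((contDiff_succ_iff_deriv (n := 1) (f := f)).1 (by rw [one_add_one_eq_two]; exact h)).2.2

theorem contDiff_one_deriv {f : ℝ → ℝ} (h : ContDiff ℝ 1 f) : Continuous (deriv f) :=
  h.continuous_deriv (by norm_num)

theorem tau_bound : ∃ c : ℝ, 0 ≤ c ∧ ∀ q, |deriv tau q| ≤ c ∧ |deriv (deriv tau) q| ≤ c := by
  have c1 : Continuous (deriv tau) := (contDiff_two_deriv tau_contDiff).continuous
  have c2 : Continuous (deriv (deriv tau)) := contDiff_one_deriv (contDiff_two_deriv tau_contDiff)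
  obtain ⟨a, ha⟩ := (isCompact_Icc (a := (1 : ℝ)) (b := 2)).exists_bound_of_continuousOn
    c1.continuousOn
  obtain ⟨b, hb⟩ := (isCompact_Icc (a := (1 : ℝ)) (b := 2)).exists_bound_of_continuousOn
    c2.continuousOn
  refine ⟨max 0 (max a b), le_max_left _ _, fun q => ?_⟩
  rcases lt_or_ge q 1 with h | h
  · rw [(tau_deriv_one h).1, (tau_deriv_one h).2]; simp
  rcases lt_or_ge 2 q with h' | h'
  · rw [(tau_deriv_zero h').1, (tau_deriv_zero h').2]; simp
  · exact ⟨(ha q ⟨h, h'⟩).trans (le_max_of_le_right (le_max_left _ _)),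
      (hb q ⟨h, h'⟩).trans (le_max_of_le_right (le_max_right _ _))⟩

theorem norm_outer_le {k : ℕ} (y : Vec k) : ‖outer y y‖ ≤ ‖y‖ ^ 2 := by
  unfold outer
  rw [ContinuousLinearMap.norm_smulRight_apply, innerSL_apply_norm, sq]

/-- `tau` at scale `N + 1` -/
def tauN (N : ℕ) (q : ℝ) : ℝ := tau (((N : ℝ) + 1)⁻¹ * q)

theorem tauN_contDiff (N : ℕ) : ContDiff ℝ 2 (tauN N) :=
  tau_contDiff.comp (contDiff_const.mul contDiff_id)

theorem tauN_deriv (N : ℕ) : deriv (tauN N) =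
    fun q => ((N : ℝ) + 1)⁻¹ * deriv tau (((N : ℝ) + 1)⁻¹ * q) := by
  ext q
  have := deriv_comp_mul_left (((N : ℝ) + 1)⁻¹) tau q
  simp only [smul_eq_mul] at this
  exact this

theorem tauN_deriv2 (N : ℕ) (q : ℝ) : deriv (deriv (tauN N)) q =
    ((N : ℝ) + 1)⁻¹ * (((N : ℝ) + 1)⁻¹ * deriv (deriv tau) (((N : ℝ) + 1)⁻¹ * q)) := by
  rw [tauN_deriv, deriv_const_mul_field]
  congr 1
  have := deriv_comp_mul_left (((N : ℝ) + 1)⁻¹) (deriv tau) q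
  simpa using this

/-- spatial cutoff -/
def chi {k : ℕ} (N : ℕ) (x : Vec k) : ℝ := tauN N (‖x‖ ^ 2)

theorem chi_contDiff {k : ℕ} (N : ℕ) : ContDiff ℝ 2 (chi (k := k) N) :=
  (tauN_contDiff N).comp (contDiff_norm_sq ℝ)

theorem chi_mem {k : ℕ} (N : ℕ) (x : Vec k) : |chi N x| ≤ 1 := by
  unfold chi tauN
  rw [abs_of_nonneg (tau_nonneg _)]
  exact tau_le_one _

theorem chi_near {k : ℕ} (N : ℕ) (x : Vec k) (h : ‖x‖ ^ 2 < N + 1) :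
    chi N x = 1 ∧ gradient (chi N) x = 0 ∧ hess (chi N) x = 0 := by
  have hN : (0 : ℝ) < (N : ℝ) + 1 := by positivity
  have h1 : ((N : ℝ) + 1)⁻¹ * ‖x‖ ^ 2 < 1 := by
    rw [inv_mul_lt_iff₀ hN]; linarith
  refine ⟨tau_one h1.le, ?_, ?_⟩
  · have := congrFun (grad_radial (k := k) (tauN_contDiff N)) x
    refine this.trans ?_
    rw [tauN_deriv]; simp [(tau_deriv_one h1).1]
  · refine (hess_radial (k := k) (tauN_contDiff N) x).trans ?_
    rw [tauN_deriv2, tauN_deriv]; simp [(tau_deriv_one h1).1, (tau_deriv_one h1).2]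

theorem chi_support {k : ℕ} (N : ℕ) : HasCompactSupport (chi (k := k) N) := by
  have hN : (0 : ℝ) < (N : ℝ) + 1 := by positivity
  refine HasCompactSupport.of_support_subset_isCompact
    (isCompact_closedBall (0 : Vec k) (2 * (N + 1))) fun x hx => ?_
  by_contra hc
  apply hx
  apply tau_zero
  rw [mem_closedBall_zero_iff, not_le] at hc
  rw [le_inv_mul_iff₀ hN]
  nlinarith

theorem chi_bound {k : ℕ} : ∃ c : ℝ, 0 ≤ c ∧ ∀ (N : ℕ) (x : Vec k),
    (1 + ‖x‖) * ‖gradient (chi N) x‖ ≤ c ∧ ‖hess (chi N) x‖ ≤ c := by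
  obtain ⟨c, hc, hb⟩ := tau_bound
  refine ⟨10 * c, by positivity, fun N x => ?_⟩
  have hN : (0 : ℝ) < (N : ℝ) + 1 := by positivity
  set r := ((N : ℝ) + 1)⁻¹ with hr
  have hr0 : 0 < r := by positivity
  have hr1 : r ≤ 1 := by
    rw [hr]; apply inv_le_one_of_one_le₀; linarith [(Nat.cast_nonneg N : (0 : ℝ) ≤ N)]
  have e1 : gradient (chi N) x = (2 * (r * deriv tau (r * ‖x‖ ^ 2))) • x := by
    refine (congrFun (grad_radial (k := k) (tauN_contDiff N)) x).trans ?_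
    rw [tauN_deriv]
  have e2 : hess (chi N) x = (2 * (r * deriv tau (r * ‖x‖ ^ 2))) • ContinuousLinearMap.id ℝ (Vec k)
      + (4 * (r * (r * deriv (deriv tau) (r * ‖x‖ ^ 2)))) • outer x x := by
    refine (hess_radial (k := k) (tauN_contDiff N) x).trans ?_
    rw [tauN_deriv2, tauN_deriv]
  rcases lt_or_ge 2 (r * ‖x‖ ^ 2) with h | h
  · rw [e1, e2, (tau_deriv_zero h).1, (tau_deriv_zero h).2]
    simp; positivity
  obtain ⟨b1, b2⟩ := hb (r * ‖x‖ ^ 2)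
  have hx := norm_nonneg x
  constructor
  · rw [e1, norm_smul, Real.norm_eq_abs, abs_mul, abs_mul, abs_of_pos hr0, abs_two]
    have s1 : r * (‖x‖ * (1 + ‖x‖)) ≤ 5 := by
      have : ‖x‖ * (1 + ‖x‖) ≤ 1 + 2 * ‖x‖ ^ 2 := by nlinarith [sq_nonneg (‖x‖ - 1)]
      nlinarith
    calc (1 + ‖x‖) * (2 * (r * |deriv tau (r * ‖x‖ ^ 2)|) * ‖x‖)
        = 2 * (r * (‖x‖ * (1 + ‖x‖))) * |deriv tau (r * ‖x‖ ^ 2)| := by ring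
      _ ≤ 2 * 5 * c := by gcongr
      _ = 10 * c := by ring
  · rw [e2]
    refine (norm_add_le _ _).trans ?_
    rw [norm_smul, norm_smul, Real.norm_eq_abs, Real.norm_eq_abs]
    simp only [abs_mul, abs_of_pos hr0, abs_two]
    rw [abs_of_pos (by norm_num : (0 : ℝ) < 4)]
    have o := norm_outer_le x
    have i := ContinuousLinearMap.norm_id_le (𝕜 := ℝ) (E := Vec k)
    calc 2 * (r * |deriv tau (r * ‖x‖ ^ 2)|) * ‖ContinuousLinearMap.id ℝ (Vec k)‖ +
          4 * (r * (r * |deriv (deriv tau) (r * ‖x‖ ^ 2)|)) * ‖outer x x‖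
        ≤ 2 * (1 * c) * 1 + 4 * (r * (1 * c)) * ‖x‖ ^ 2 := by gcongr
      _ = 2 * c + 4 * c * (r * ‖x‖ ^ 2) := by ring
      _ ≤ 2 * c + 4 * c * 2 := by gcongr
      _ = 10 * c := by ring

/-! ### Product test functions -/

theorem gradient_const_mul' {k : ℕ} {F : Vec k → ℝ} (hF : Differentiable ℝ F) (c : ℝ) :
    gradient (fun x => c * F x) = fun x => c • gradient F x := by
  ext1 x
  unfold gradient
  rw [fderiv_const_mul (hF x)]
  simp

theorem hess_const_mul' {k : ℕ} {F : Vec k → ℝ} (hF : ContDiff ℝ 2 F) (c : ℝ) (x : Vec k) :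
    hess (fun x => c * F x) x = c • hess F x := by
  unfold hess
  rw [gradient_const_mul' (hF.differentiable (by norm_num)) c]
  have : Differentiable ℝ (gradient F) := by
    have h2 : ContDiff ℝ 1 (fderiv ℝ F) := hF.fderiv_right (by norm_num)
    exact ((InnerProductSpace.toDual ℝ (Vec k)).symm.toContinuousLinearEquiv.contDiff.comp
      h2).differentiable (by norm_num)
  exact fderiv_const_smul (this x) c

theorem gradient_cont {k : ℕ} {F : Vec k → ℝ} (hF : ContDiff ℝ 2 F) : ContDiff ℝ 1 (gradient F) := by
  have h2 : ContDiff ℝ 1 (fderiv ℝ F) := hF.fderiv_right (by norm_num)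
  exact ((InnerProductSpace.toDual ℝ (Vec k)).symm.toContinuousLinearEquiv.contDiff.comp h2)

theorem mixed_prod {n m : ℕ} {χ : Vec n → ℝ} {ψ : Vec m → ℝ} (hχ : ContDiff ℝ 2 χ)
    (hψ : ContDiff ℝ 2 ψ) (x : Vec n) (y : Vec m) :
    hessMixed (fun x y => χ x * ψ y) x y = (fderiv ℝ χ x).smulRight (gradient ψ y) := by
  unfold hessMixed
  have : (fun x' => gradient (fun y => χ x' * ψ y) y) = fun x' => χ x' • gradient ψ y := by
    ext1 x'
    rw [gradient_const_mul' (hψ.differentiable (by norm_num))]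
  rw [this]
  exact ((hχ.differentiable (by norm_num) x).hasFDerivAt.smul_const _).fderiv

theorem norm_mixed {n m : ℕ} {χ : Vec n → ℝ} {ψ : Vec m → ℝ} (hχ : ContDiff ℝ 2 χ)
    (hψ : ContDiff ℝ 2 ψ) (x : Vec n) (y : Vec m) :
    ‖hessMixed (fun x y => χ x * ψ y) x y‖ = ‖gradient χ x‖ * ‖gradient ψ y‖ := by
  rw [mixed_prod hχ hψ, ContinuousLinearMap.norm_smulRight_apply]
  congr 1
  unfold gradient
  rw [LinearIsometryEquiv.norm_map]

theorem prod_testFun {n m : ℕ} {χ : Vec n → ℝ} {ψ : Vec m → ℝ} (hχ : TestFun χ)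
    (hψ : TestFun ψ) : TestFun2 (fun x y => χ x * ψ y) := by
  constructor
  · exact (hχ.1.comp contDiff_fst).mul (hψ.1.comp contDiff_snd)
  · refine HasCompactSupport.of_support_subset_isCompact (hχ.2.isCompact.prod hψ.2.isCompact) ?_
    rintro ⟨x, y⟩ h
    have h' : χ x * ψ y ≠ 0 := h
    exact ⟨subset_tsupport _ (left_ne_zero_of_mul h'), subset_tsupport _ (right_ne_zero_of_mul h')⟩

theorem testFun_bound {k : ℕ} {ψ : Vec k → ℝ} (hψ : TestFun ψ) : ∃ B : ℝ, 0 ≤ B ∧ ∀ y,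
    (1 + ‖y‖) ^ 2 * |ψ y| ≤ B ∧ (1 + ‖y‖) ^ 2 * ‖gradient ψ y‖ ≤ B ∧
      (1 + ‖y‖) ^ 2 * ‖hess ψ y‖ ≤ B := by
  have g1 := gradient_cont hψ.1
  have cH : Continuous (hess ψ) := g1.continuous_fderiv (by norm_num)
  have c1 := hψ.1.continuous
  have c2 := g1.continuous
  have aux : ∀ F : Vec k → ℝ, Continuous F → (∀ y, y ∉ tsupport ψ → F y = 0) →
      ∃ B : ℝ, ∀ y, (1 + ‖y‖) ^ 2 * |F y| ≤ B := by
    intro F hF h0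
    obtain ⟨B, hB⟩ := hψ.2.isCompact.exists_bound_of_continuousOn
      (f := fun y => (1 + ‖y‖) ^ 2 * |F y|) (by fun_prop)
    refine ⟨max 0 B, fun y => ?_⟩
    by_cases hy : y ∈ tsupport ψ
    · have := hB y hy
      rw [Real.norm_eq_abs] at this
      exact (le_abs_self _).trans (this.trans (le_max_right _ _))
    · rw [h0 y hy]; simp
  have ev : ∀ y, y ∉ tsupport ψ → ψ =ᶠ[𝓝 y] fun _ => 0 := fun y hy =>
    notMem_tsupport_iff_eventuallyEq.1 hy
  have evg : ∀ y, y ∉ tsupport ψ → gradient ψ =ᶠ[𝓝 y] fun _ => 0 := fun y hy => by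
    filter_upwards [(ev y hy).eventually_nhds] with z hz
    have hz' : ψ =ᶠ[𝓝 z] fun _ => 0 := hz
    unfold gradient
    rw [hz'.fderiv_eq]; simp
  obtain ⟨B1, h1⟩ := aux ψ c1 fun y hy => (ev y hy).eq_of_nhds
  obtain ⟨B2, h2⟩ := aux (fun y => ‖gradient ψ y‖) (by fun_prop) fun y hy => by
    rw [(evg y hy).eq_of_nhds]; simp
  obtain ⟨B3, h3⟩ := aux (fun y => ‖hess ψ y‖) (by fun_prop) fun y hy => by
    unfold hess
    rw [(evg y hy).fderiv_eq]; simp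
  simp only [abs_norm] at h2 h3
  refine ⟨max 0 (max B1 (max B2 B3)), le_max_left _ _, fun y => ⟨?_, ?_, ?_⟩⟩
  · exact (h1 y).trans (by simp)
  · exact (h2 y).trans (by simp)
  · exact (h3 y).trans (by simp)


/-! ### Dynkin formula for the fast variable -/

/-- generator acting on functions of `y` only -/
def genY {n m d : ℕ} (C : Coeffs n m d) (ε : ℝ) (μ : Measure (Vec n))
    (ψ : Vec m → ℝ) (x : Vec n) (y : Vec m) : ℝ :=
  ⟪ε⁻¹ • C.f x μ y + (Real.sqrt ε)⁻¹ • C.h x μ y, gradient ψ y⟫ +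
    (1 / (2 * ε)) * trCLM (((C.g x μ y).comp (adj (C.g x μ y))).comp (hess ψ y))

theorem genSF_prod {n m d : ℕ} (C : Coeffs n m d) (ε : ℝ) (μ : Measure (Vec n))
    {χ : Vec n → ℝ} {ψ : Vec m → ℝ} (hχ : ContDiff ℝ 2 χ)
    (hψ : ContDiff ℝ 2 ψ) (x : Vec n) (y : Vec m) :
    genSF C ε μ (fun x y => χ x * ψ y) x y =
      ψ y * ⟪C.b x μ y, gradient χ x⟫ + (Real.sqrt ε)⁻¹ * (ψ y * ⟪C.K x μ y, gradient χ x⟫) +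
      (1 / 2) * (ψ y * trCLM (((C.σ x μ y).comp (adj (C.σ x μ y))).comp (hess χ x))) +
      (Real.sqrt ε)⁻¹ * trCLM (((C.σ x μ y).comp (adj (C.g x μ y))).comp
        (hessMixed (fun x y => χ x * ψ y) x y)) +
      χ x * genY C ε μ ψ x y := by
  have e1 : gradient (fun x' => χ x' * ψ y) x = ψ y • gradient χ x := by
    have : (fun x' => χ x' * ψ y) = fun x' => ψ y * χ x' := by ext; ring
    rw [this, gradient_const_mul' (hχ.differentiable (by norm_num))]
  have e2 : hess (fun x' => χ x' * ψ y) x = ψ y • hess χ x := by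
    have : (fun x' => χ x' * ψ y) = fun x' => ψ y * χ x' := by ext; ring
    rw [this, hess_const_mul' hχ]
  have e3 : gradient (fun y => χ x * ψ y) y = χ x • gradient ψ y := by
    rw [gradient_const_mul' (hψ.differentiable (by norm_num))]
  have e4 : hess (fun y => χ x * ψ y) y = χ x • hess ψ y := hess_const_mul' hψ _ _
  unfold genSF genY
  rw [e1, e2, e3, e4]
  simp only [← trL_apply, ContinuousLinearMap.comp_smul, map_smul, smul_eq_mul, inner_add_left,
    real_inner_smul_left, real_inner_smul_right]
  ring

theorem genSF_prod_near {n m d : ℕ} (C : Coeffs n m d) (ε : ℝ) (μ : Measure (Vec n))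
    {ψ : Vec m → ℝ} (hψ : ContDiff ℝ 2 ψ) (x : Vec n) (y : Vec m) (N : ℕ)
    (h : ‖x‖ ^ 2 < N + 1) :
    genSF C ε μ (fun x y => chi N x * ψ y) x y = genY C ε μ ψ x y := by
  rw [genSF_prod C ε μ (chi_contDiff N) hψ]
  obtain ⟨h1, h2, h3⟩ := chi_near N x h
  have h4 : hessMixed (fun x y => chi N x * ψ y) x y = 0 := by
    rw [← norm_eq_zero, norm_mixed (chi_contDiff N) hψ, h2]; simp
  rw [h1, h2, h3, h4]
  simp [← trL_apply]

theorem aux_real_q1 {b b0 L x y : ℝ} (hb0 : 0 ≤ b0) (hL0 : 0 ≤ L) (hx : 0 ≤ x) (hy : 0 ≤ y)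
    (gb : b ≤ b0 + L * (x + y)) :
    b ≤ (1 + y) ^ 2 * (1 + x) * ((1 + L) * (1 + b0)) := by
  have hxy := mul_nonneg hx hy
  have hxyy := mul_nonneg hxy hy
  have hyy := mul_nonneg hy hy
  have e : (1 + y) ^ 2 * (1 + x) = 1 + x + 2 * y + y * y + 2 * (x * y) + x * y * y := by ring
  have i1 : x + y ≤ (1 + y) ^ 2 * (1 + x) := by rw [e]; linarith
  have i2 : 1 ≤ (1 + y) ^ 2 * (1 + x) := by rw [e]; linarith
  calc b ≤ b0 + L * (x + y) := gb
    _ ≤ b0 * ((1 + y) ^ 2 * (1 + x)) + L * ((1 + y) ^ 2 * (1 + x)) :=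
      add_le_add (le_mul_of_one_le_right hb0 i2) (mul_le_mul_of_nonneg_left i1 hL0)
    _ = ((1 + y) ^ 2 * (1 + x)) * (b0 + L) := by ring
    _ ≤ _ := mul_le_mul_of_nonneg_left (by have := mul_nonneg hL0 hb0; linarith)
      (by linarith)

set_option maxHeartbeats 2000000 in
theorem genSF_prod_bound {n m d : ℕ} {C : Coeffs n m d} (SAh : SA13 C) (ε : ℝ)
    {ψ : Vec m → ℝ} (hψ : TestFun ψ) :
    ∃ D : ℝ, 0 ≤ D ∧ ∀ (N : ℕ) (μ : Measure (Vec n)) (x : Vec n) (y : Vec m), memP2 μ →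
      |genSF C ε μ (fun x y => chi N x * ψ y) x y| ≤ D * (1 + ‖C.b 0 μ 0‖) := by
  obtain ⟨B, hB0, hB⟩ := testFun_bound hψ
  obtain ⟨c, hc0, hc⟩ := chi_bound (k := n)
  obtain ⟨L, hL⟩ : ∃ z, z = |SAh.CL| := ⟨_, rfl⟩
  obtain ⟨a, ha⟩ : ∃ z, z = SAh.gr := ⟨_, rfl⟩
  have hL0 : 0 ≤ L := hL ▸ abs_nonneg _
  have ha0 : 0 ≤ a := ha ▸ SAh.gr_nonneg
  obtain ⟨r, hr⟩ : ∃ z, z = |(Real.sqrt ε)⁻¹| := ⟨_, rfl⟩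
  have hr0 : 0 ≤ r := hr ▸ abs_nonneg _
  obtain ⟨D, hD⟩ : ∃ z, z = B * c * (1 + L) + r * (a * B * c) + (1 / 2) * (‖trL n‖ * (a ^ 2 * B * c)) +
    r * (‖trL n‖ * (a ^ 2 * B * c)) + (|ε⁻¹| * (a * B) + r * (a * B)
      + |1 / (2 * ε)| * (‖trL m‖ * (a ^ 2 * B))) := ⟨_, rfl⟩
  have hD0 : 0 ≤ D := by rw [hD]; positivity
  refine ⟨D, hD0, fun N μ x y hμ => ?_⟩
  obtain ⟨B1, B2, B3⟩ := hB y
  obtain ⟨c1, c2⟩ := hc N x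
  obtain ⟨gK, gf, gh, gσ, gg⟩ := SAh.growth_all x μ y hμ
  have gb := SAh.lipb.fixed x μ y hμ
  rw [← hL] at gb
  rw [← ha] at gK gf gh gσ gg
  rw [genSF_prod C ε μ (chi_contDiff N) hψ.1]
  have hy := norm_nonneg y
  have hx := norm_nonneg x
  have hb0 := norm_nonneg (C.b 0 μ 0)
  have c1' : ‖gradient (chi N) x‖ ≤ c := by
    nlinarith [norm_nonneg (gradient (chi N) x)]
  have p1 : (1 + ‖y‖) ≤ (1 + ‖y‖) ^ 2 := by nlinarith
  have t1 : |ψ y * ⟪C.b x μ y, gradient (chi N) x⟫| ≤ B * c * (1 + L) * (1 + ‖C.b 0 μ 0‖) := by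
    rw [abs_mul]
    have q1 : ‖C.b x μ y‖ ≤ (1 + ‖y‖) ^ 2 * (1 + ‖x‖) * ((1 + L) * (1 + ‖C.b 0 μ 0‖)) :=
      aux_real_q1 hb0 hL0 hx hy gb
    calc |ψ y| * |⟪C.b x μ y, gradient (chi N) x⟫|
        ≤ |ψ y| * ((1 + ‖y‖) ^ 2 * (1 + ‖x‖) * ((1 + L) * (1 + ‖C.b 0 μ 0‖))
          * ‖gradient (chi N) x‖) := by
          refine mul_le_mul_of_nonneg_left ?_ (abs_nonneg _)
          refine (abs_real_inner_le_norm _ _).trans ?_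
          exact mul_le_mul_of_nonneg_right q1 (norm_nonneg _)
      _ = ((1 + ‖y‖) ^ 2 * |ψ y|) * ((1 + ‖x‖) * ‖gradient (chi N) x‖) *
          ((1 + L) * (1 + ‖C.b 0 μ 0‖)) := by ring
      _ ≤ B * c * ((1 + L) * (1 + ‖C.b 0 μ 0‖)) := by gcongr
      _ = _ := by ring
  have t2 : |(Real.sqrt ε)⁻¹ * (ψ y * ⟪C.K x μ y, gradient (chi N) x⟫)| ≤ r * (a * B * c) := by
    rw [abs_mul, abs_mul, ← hr]
    refine mul_le_mul_of_nonneg_left ?_ hr0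
    calc |ψ y| * |⟪C.K x μ y, gradient (chi N) x⟫|
        ≤ |ψ y| * ((a * (1 + ‖y‖) ^ 2) * c) := by
          refine mul_le_mul_of_nonneg_left ?_ (abs_nonneg _)
          refine (abs_real_inner_le_norm _ _).trans ?_
          gcongr
          exact gK.trans (by gcongr)
      _ = a * ((1 + ‖y‖) ^ 2 * |ψ y|) * c := by ring
      _ ≤ _ := by gcongr
  have t3 : |(1 / 2) * (ψ y * trCLM (((C.σ x μ y).comp (adj (C.σ x μ y))).comp
      (hess (chi N) x)))| ≤ (1 / 2) * (‖trL n‖ * (a ^ 2 * B * c)) := by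
    rw [abs_mul, abs_mul, abs_of_pos (by norm_num : (0 : ℝ) < 1 / 2)]
    refine mul_le_mul_of_nonneg_left ?_ (by norm_num)
    calc |ψ y| * |trCLM (((C.σ x μ y).comp (adj (C.σ x μ y))).comp (hess (chi N) x))|
        ≤ |ψ y| * (‖trL n‖ * ((a * (1 + ‖y‖)) * (a * (1 + ‖y‖)) * c)) := by
          refine mul_le_mul_of_nonneg_left ?_ (abs_nonneg _)
          refine (trCLM_comp3_le _ _ _).trans ?_
          gcongr
      _ = ‖trL n‖ * (a ^ 2 * ((1 + ‖y‖) ^ 2 * |ψ y|) * c) := by ring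
      _ ≤ _ := by gcongr
  have t4 : |(Real.sqrt ε)⁻¹ * trCLM (((C.σ x μ y).comp (adj (C.g x μ y))).comp
      (hessMixed (fun x y => chi N x * ψ y) x y))| ≤ r * (‖trL n‖ * (a ^ 2 * B * c)) := by
    rw [abs_mul, ← hr]
    refine mul_le_mul_of_nonneg_left ?_ hr0
    calc _ ≤ ‖trL n‖ * ((a * (1 + ‖y‖)) * (a * (1 + ‖y‖)) * (c * ‖gradient ψ y‖)) := by
          refine (trCLM_comp3_le _ _ _).trans ?_
          rw [norm_mixed (chi_contDiff N) hψ.1]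
          gcongr
      _ = ‖trL n‖ * (a ^ 2 * ((1 + ‖y‖) ^ 2 * ‖gradient ψ y‖) * c) := by ring
      _ ≤ _ := by gcongr
  have t5 : |chi N x * genY C ε μ ψ x y| ≤ |ε⁻¹| * (a * B) + r * (a * B)
      + |1 / (2 * ε)| * (‖trL m‖ * (a ^ 2 * B)) := by
    rw [abs_mul]
    refine (mul_le_of_le_one_left (abs_nonneg _) (chi_mem N x)).trans ?_
    unfold genY
    rw [inner_add_left, real_inner_smul_left, real_inner_smul_left]
    refine (abs_add_le _ _).trans ?_
    refine add_le_add ((abs_add_le _ _).trans (add_le_add ?_ ?_)) ?_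
    · rw [abs_mul]
      refine mul_le_mul_of_nonneg_left ?_ (abs_nonneg _)
      calc _ ≤ (a * (1 + ‖y‖) ^ 2) * ‖gradient ψ y‖ := by
            refine (abs_real_inner_le_norm _ _).trans ?_
            gcongr
            exact gf.trans (by gcongr)
        _ = a * ((1 + ‖y‖) ^ 2 * ‖gradient ψ y‖) := by ring
        _ ≤ _ := by gcongr
    · rw [abs_mul, ← hr]
      refine mul_le_mul_of_nonneg_left ?_ hr0
      calc _ ≤ (a * (1 + ‖y‖) ^ 2) * ‖gradient ψ y‖ := by
            refine (abs_real_inner_le_norm _ _).trans ?_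
            gcongr
            exact gh.trans (by gcongr)
        _ = a * ((1 + ‖y‖) ^ 2 * ‖gradient ψ y‖) := by ring
        _ ≤ _ := by gcongr
    · rw [abs_mul]
      refine mul_le_mul_of_nonneg_left ?_ (abs_nonneg _)
      calc _ ≤ ‖trL m‖ * ((a * (1 + ‖y‖)) * (a * (1 + ‖y‖)) * ‖hess ψ y‖) := by
            refine (trCLM_comp3_le _ _ _).trans ?_
            gcongr
        _ = ‖trL m‖ * (a ^ 2 * ((1 + ‖y‖) ^ 2 * ‖hess ψ y‖)) := by ring
        _ ≤ _ := by gcongr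
  refine (abs_add_le _ _).trans ?_
  refine (add_le_add (abs_add_le _ _) le_rfl).trans ?_
  refine (add_le_add (add_le_add (abs_add_le _ _) le_rfl) le_rfl).trans ?_
  refine (add_le_add (add_le_add (add_le_add (abs_add_le _ _) le_rfl) le_rfl) le_rfl).trans ?_
  have rest : 0 ≤ r * (a * B * c) + (1 / 2) * (‖trL n‖ * (a ^ 2 * B * c)) +
    r * (‖trL n‖ * (a ^ 2 * B * c)) + (|ε⁻¹| * (a * B) + r * (a * B)
      + |1 / (2 * ε)| * (‖trL m‖ * (a ^ 2 * B))) := by positivity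
  have := mul_nonneg rest hb0
  rw [hD]
  linarith


/-- the drift at the origin is integrable along the flow of marginals up to time `t` -/
def GoodT {n m d : ℕ} (C : Coeffs n m d) {Ω : Type} [MeasurableSpace Ω] (P : Measure Ω)
    (X : ℝ → Ω → Vec n) (t : ℝ) : Prop :=
  IntegrableOn (fun s => C.b 0 (P.map (X s)) 0) (Set.Ioc 0 t)

theorem GoodT.mono {n m d : ℕ} {C : Coeffs n m d} {Ω : Type} [MeasurableSpace Ω] {P : Measure Ω}
    {X : ℝ → Ω → Vec n} {s t : ℝ} (h : GoodT C P X t) (hst : s ≤ t) : GoodT C P X s :=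
  IntegrableOn.mono_set h (Set.Ioc_subset_Ioc_right hst)

theorem inner_int_of_good {n : ℕ} {F G : ℝ → Vec n} {t : ℝ}
    (hF : IntegrableOn F (Set.Ioc 0 t)) (hG : Continuous G) :
    IntegrableOn (fun s => ⟪F s, G s⟫) (Set.Ioc 0 t) := by
  obtain ⟨M, hM⟩ := (isCompact_Icc (a := (0 : ℝ)) (b := t)).exists_bound_of_continuousOn
    hG.continuousOn
  refine Integrable.mono' (hF.norm.mul_const M)
    (hF.aestronglyMeasurable.inner hG.aestronglyMeasurable) ?_
  refine (ae_restrict_mem measurableSet_Ioc).mono fun s hs => ?_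
  refine (abs_real_inner_le_norm _ _).trans ?_
  exact mul_le_mul_of_nonneg_left (hM s ⟨hs.1.le, hs.2⟩) (norm_nonneg _)

theorem gradx_path_cont {n m : ℕ} {x : ℝ → Vec n} {y : ℝ → Vec m} (hx : Continuous x)
    (hy : Continuous y) {φ : Vec n → Vec m → ℝ} (hφ : ContDiff ℝ 2 (Function.uncurry φ)) :
    Continuous (fun s => gradient (fun x' => φ x' (y s)) (x s)) :=
  (gradx_contDiff hφ).continuous.comp (hx.prodMk hy)

section
variable {n m d : ℕ} {C : Coeffs n m d} {ε : ℝ}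
    {Ω : Type} [mΩ : MeasurableSpace Ω] {P : Measure Ω}
    {ℱ : Filtration ℝ mΩ} {X : ℝ → Ω → Vec n} {Y : ℝ → Ω → Vec m} {ξ : Ω → Vec n}
    {ζ : Ω → Vec m}

theorem genSF_integrable [IsProbabilityMeasure P] (SAh : SA13 C)
    (S : IsSFSolution C ε P ℱ X Y ξ ζ) {φ : Vec n → Vec m → ℝ}
    (hφ : ContDiff ℝ 2 (Function.uncurry φ)) (ω : Ω) {t : ℝ} (ht : GoodT C P X t) :
    IntegrableOn (fun s => genSF C ε (P.map (X s)) φ (X s ω) (Y s ω)) (Set.Ioc 0 t) := by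
  have h1 := genSF_sub_integrable SAh S hφ ω t
  have h2 := inner_int_of_good ht (gradx_path_cont (S.contX ω) (S.contY ω) hφ)
  refine (h1.add h2).congr (ae_of_all _ fun s => ?_)
  simp

theorem mart_int [IsProbabilityMeasure P] (S : IsSFSolution C ε P ℱ X Y ξ ζ)
    {φ : Vec n → Vec m → ℝ} (hφ : TestFun2 φ) {s t : ℝ} (hs : 0 ≤ s) (hst : s ≤ t) :
    ∫ ω, (φ (X t ω) (Y t ω) -
        ∫ s in Set.Ioc (0 : ℝ) t, genSF C ε (P.map (X s)) φ (X s ω) (Y s ω)) ∂P =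
    ∫ ω, (φ (X s ω) (Y s ω) -
        ∫ s in Set.Ioc (0 : ℝ) s, genSF C ε (P.map (X s)) φ (X s ω) (Y s ω)) ∂P := by
  have h := (S.mart φ hφ).2 s t hs hst
  rw [← integral_condExp (ℱ.le s)]
  exact integral_congr_ae h

theorem dynkin_le [IsProbabilityMeasure P] (SAh : SA13 C) (S : IsSFSolution C ε P ℱ X Y ξ ζ)
    {ψ : Vec m → ℝ} (hψ : TestFun ψ) {s t : ℝ} (hs : 0 ≤ s) (hst : s ≤ t)
    (ht : GoodT C P X t) {H : Vec m → ℝ} (hHc : Continuous H) {BH : ℝ} (hHb : ∀ y, |H y| ≤ BH)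
    (hH : ∀ μ x y, memP2 μ → genY C ε μ ψ x y ≤ H y) :
    ∫ ω, ψ (Y t ω) ∂P - ∫ ω, ψ (Y s ω) ∂P ≤ ∫ r in Set.Ioc s t, ∫ ω, H (Y r ω) ∂P := by
  obtain ⟨D, hD0, hD⟩ := genSF_prod_bound SAh ε hψ
  have hT : ∀ N : ℕ, TestFun2 (fun (x : Vec n) y => chi N x * ψ y) := fun N =>
    prod_testFun ⟨chi_contDiff N, chi_support N⟩ hψ
  set G : ℕ → Ω → ℝ → ℝ := fun N ω r =>
    genSF C ε (P.map (X r)) (fun x y => chi N x * ψ y) (X r ω) (Y r ω) with hG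
  have hGi : ∀ N ω, IntegrableOn (G N ω) (Set.Ioc 0 t) := fun N ω =>
    genSF_integrable SAh S (hT N).1 ω ht
  have hsub : Set.Ioc s t ⊆ Set.Ioc 0 t := Set.Ioc_subset_Ioc_left hs
  have hsplit : ∀ N ω, ∫ r in Set.Ioc s t, G N ω r =
      (∫ r in Set.Ioc 0 t, G N ω r) - ∫ r in Set.Ioc 0 s, G N ω r := by
    intro N ω
    rw [eq_sub_iff_add_eq, add_comm, ← setIntegral_union _ measurableSet_Ioc, Set.Ioc_union_Ioc_eq_Ioc hs hst]
    · exact (hGi N ω).mono_set (Set.Ioc_subset_Ioc_right hst)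
    · exact (hGi N ω).mono_set hsub
    · rw [Set.disjoint_left]
      rintro r hr hr2
      exact absurd hr.2 (not_le.2 hr2.1)
  obtain ⟨B, hB0, hB⟩ := testFun_bound hψ
  have hψB : ∀ y, |ψ y| ≤ B := fun y => by
    have h1 := (hB y).1
    have h2 : (1 : ℝ) ≤ (1 + ‖y‖) ^ 2 := by nlinarith [norm_nonneg y]
    exact (le_mul_of_one_le_left (abs_nonneg _) h2).trans h1
  have hφB : ∀ N (x : Vec n) y, |chi N x * ψ y| ≤ B := fun N x y => by
    rw [abs_mul]
    exact (mul_le_of_le_one_left (abs_nonneg _) (chi_mem N x)).trans (hψB y)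
  have hφm : ∀ N r, Measurable fun ω => chi N (X r ω) * ψ (Y r ω) := fun N r =>
    ((chi_contDiff N).continuous.measurable.comp (S.measX r)).mul
      (hψ.1.continuous.measurable.comp (S.measY r))
  have hφi : ∀ N r, Integrable (fun ω => chi N (X r ω) * ψ (Y r ω)) P := fun N r =>
    Integrable.of_bound (hφm N r).aestronglyMeasurable B (ae_of_all _ fun ω => hφB N _ _)
  have hIi : ∀ N r, 0 ≤ r → Integrable (fun ω => ∫ u in Set.Ioc 0 r, G N ω u) P := by
    intro N r hr
    have := ((S.mart _ (hT N)).1 r hr).2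
    refine ((hφi N r).sub this).congr (ae_of_all _ fun ω => ?_)
    simp [hG]
  have key : ∀ N, ∫ ω, chi N (X t ω) * ψ (Y t ω) ∂P - ∫ ω, chi N (X s ω) * ψ (Y s ω) ∂P =
      ∫ ω, (∫ r in Set.Ioc s t, G N ω r) ∂P := by
    intro N
    have h := mart_int S (hT N) hs hst
    rw [integral_sub (hφi N t) (hIi N t (hs.trans hst)), integral_sub (hφi N s) (hIi N s hs)] at h
    simp_rw [hsplit]
    rw [integral_sub (hIi N t (hs.trans hst)) (hIi N s hs)]
    linarith
  -- eventual equality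
  have hev : ∀ ω, ∃ N0 : ℕ, ∀ N ≥ N0, ∀ r ∈ Set.Icc 0 t, ‖X r ω‖ ^ 2 < N + 1 := by
    intro ω
    obtain ⟨M, hM⟩ := (isCompact_Icc (a := (0 : ℝ)) (b := t)).exists_bound_of_continuousOn
      (S.contX ω).continuousOn
    obtain ⟨N0, hN0⟩ := exists_nat_ge (M ^ 2)
    refine ⟨N0, fun N hN r hr => ?_⟩
    have h1 := hM r hr
    have h2 : (N0 : ℝ) ≤ N := by exact_mod_cast hN
    have h3 := norm_nonneg (X r ω)
    have h4 : ‖X r ω‖ ^ 2 ≤ M ^ 2 := by gcongr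
    linarith
  set GY : Ω → ℝ → ℝ := fun ω r => genY C ε (P.map (X r)) ψ (X r ω) (Y r ω) with hGY
  have hGe : ∀ ω, ∃ N0 : ℕ, ∀ N ≥ N0, ∀ r ∈ Set.Ioc s t, G N ω r = GY ω r := by
    intro ω
    obtain ⟨N0, h⟩ := hev ω
    refine ⟨N0, fun N hN r hr => ?_⟩
    exact genSF_prod_near C ε _ hψ.1 _ _ N (h N hN r ⟨(hsub hr).1.le, hr.2⟩)
  have hGYi : ∀ ω, IntegrableOn (GY ω) (Set.Ioc s t) := by
    intro ω
    obtain ⟨N0, h⟩ := hGe ω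
    exact ((hGi N0 ω).mono_set hsub).congr_fun (h N0 le_rfl) measurableSet_Ioc
  have hlim : ∀ ω, Tendsto (fun N => ∫ r in Set.Ioc s t, G N ω r) atTop
      (𝓝 (∫ r in Set.Ioc s t, GY ω r)) := by
    intro ω
    obtain ⟨N0, h⟩ := hGe ω
    refine tendsto_const_nhds.congr' ?_
    filter_upwards [eventually_ge_atTop N0] with N hN
    exact (setIntegral_congr_fun measurableSet_Ioc (h N hN)).symm
  have hbd : ∀ N ω, |∫ r in Set.Ioc s t, G N ω r| ≤
      ∫ r in Set.Ioc s t, D * (1 + ‖C.b 0 (P.map (X r)) 0‖) := by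
    intro N ω
    rw [← Real.norm_eq_abs]
    refine norm_integral_le_of_norm_le ?_ ?_
    · refine Integrable.const_mul ?_ D
      refine Integrable.add (integrable_const _) ?_
      exact (IntegrableOn.mono_set ht hsub).norm
    · refine (ae_restrict_mem measurableSet_Ioc).mono fun r hr => ?_
      exact hD N _ _ _ (S.lawP2X r (hsub hr).1.le)
  have hdm : ∀ N, AEStronglyMeasurable (fun ω => ∫ r in Set.Ioc s t, G N ω r) P := by
    intro N
    simp_rw [hsplit]
    exact ((hIi N t (hs.trans hst)).sub (hIi N s hs)).aestronglyMeasurable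
  have L1 := tendsto_integral_of_dominated_convergence _ hdm (integrable_const _)
    (fun N => ae_of_all _ (hbd N)) (ae_of_all P hlim)
  have hφl : ∀ r ∈ Set.Icc 0 t, Tendsto (fun N => ∫ ω, chi N (X r ω) * ψ (Y r ω) ∂P) atTop
      (𝓝 (∫ ω, ψ (Y r ω) ∂P)) := by
    intro r hr
    refine tendsto_integral_of_dominated_convergence (fun _ => B)
      (fun N => (hφm N r).aestronglyMeasurable) (integrable_const _)
      (fun N => ae_of_all _ fun ω => hφB N _ _) (ae_of_all _ fun ω => ?_)
    obtain ⟨N0, h⟩ := hev ω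
    refine tendsto_const_nhds.congr' ?_
    filter_upwards [eventually_ge_atTop N0] with N hN
    rw [(chi_near N _ (h N hN r hr)).1, one_mul]
  have L2 := (hφl t ⟨hs.trans hst, le_rfl⟩).sub (hφl s ⟨hs, hst⟩)
  simp_rw [key] at L2
  rw [tendsto_nhds_unique L2 L1]
  have hDi : Integrable (fun ω => ∫ r in Set.Ioc s t, GY ω r) P := by
    refine Integrable.of_bound (aestronglyMeasurable_of_tendsto_ae atTop hdm (ae_of_all P hlim))
      (∫ r in Set.Ioc s t, D * (1 + ‖C.b 0 (P.map (X r)) 0‖)) (ae_of_all _ fun ω => ?_)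
    exact le_of_tendsto (hlim ω).abs (Eventually.of_forall fun N => hbd N ω)
  have hYm : Measurable (Function.uncurry fun r ω => H (Y r ω)) :=
    hHc.measurable.comp (measurable_uncurry_of_continuous_of_measurable S.contY S.measY)
  have hprod : Integrable (Function.uncurry fun r ω => H (Y r ω))
      ((volume.restrict (Set.Ioc s t)).prod P) :=
    Integrable.of_bound hYm.aestronglyMeasurable BH (ae_of_all _ fun z => hHb _)
  rw [integral_integral_swap hprod]
  refine integral_mono hDi hprod.integral_prod_right fun ω => ?_
  refine setIntegral_mono_on (hGYi ω) ?_ measurableSet_Ioc fun r hr => ?_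
  · exact ((hHc.comp (S.contY ω)).integrableOn_Icc (a := s) (b := t)).mono_set
      Set.Ioc_subset_Icc_self
  · exact hH _ _ _ (S.lawP2X r (hsub hr).1.le)
end


/-! ### Lyapunov functions -/

/-- weight -/
def wgt (p q : ℝ) : ℝ := (1 + q ^ 2) ^ ((p - 2) / 4)

/-- Lyapunov function -/
def Phi (p q : ℝ) : ℝ := ∫ s in (0 : ℝ)..q, wgt p s

/-- truncated Lyapunov function -/
def PhiR (p : ℝ) (R : ℕ) (q : ℝ) : ℝ := ∫ s in (0 : ℝ)..q, tauN R s * wgt p s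

theorem wgt_contDiff (p : ℝ) : ContDiff ℝ 2 (wgt p) := by
  unfold wgt
  refine ContDiff.rpow_const_of_ne (by fun_prop) fun q => ?_
  positivity

theorem wgt_cont (p : ℝ) : Continuous (wgt p) := (wgt_contDiff p).continuous

theorem wgt_pos (p q : ℝ) : 0 < wgt p q := by unfold wgt; positivity

theorem wgt_mono {p : ℝ} (hp : 2 ≤ p) {a b : ℝ} (ha : 0 ≤ a) (hab : a ≤ b) :
    wgt p a ≤ wgt p b := by
  unfold wgt
  refine Real.rpow_le_rpow (by positivity) ?_ (by linarith)
  gcongr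

theorem wgt_deriv (p q : ℝ) : deriv (wgt p) q = (2 * q) * ((p - 2) / 4) * (1 + q ^ 2) ^ ((p - 2) / 4 - 1) := by
  have h1 : HasDerivAt (fun q : ℝ => 1 + q ^ 2) (2 * q) q := by
    have := ((hasDerivAt_id q).pow 2).const_add 1
    simpa using this
  have h2 := h1.rpow_const (p := (p - 2) / 4) (Or.inl (by positivity))
  exact h2.deriv

theorem wgt_deriv_le {p : ℝ} (hp : 2 ≤ p) {q : ℝ} (hq : 0 ≤ q) :
    (1 + q) * deriv (wgt p) q ≤ (p - 2) * wgt p q := by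
  rw [wgt_deriv, Real.rpow_sub_one (by positivity)]
  have h1 : (0 : ℝ) < 1 + q ^ 2 := by positivity
  have h2 : 0 < wgt p q := wgt_pos p q
  unfold wgt at h2 ⊢
  have e : (1 + q) * (2 * q * ((p - 2) / 4) * ((1 + q ^ 2) ^ ((p - 2) / 4) / (1 + q ^ 2))) =
    ((p - 2) * (1 + q ^ 2) ^ ((p - 2) / 4)) * ((1 + q) * q / (2 * (1 + q ^ 2))) := by
    field_simp; ring
  rw [e]
  refine mul_le_of_le_one_right (by have : 0 ≤ p - 2 := by linarith
                                    positivity) ?_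
  rw [div_le_one (by positivity)]
  nlinarith [sq_nonneg (q - 1)]

theorem tauN_nonneg (R : ℕ) (q : ℝ) : 0 ≤ tauN R q := tau_nonneg _
theorem tauN_le_one (R : ℕ) (q : ℝ) : tauN R q ≤ 1 := tau_le_one _
theorem tauN_cont (R : ℕ) : Continuous (tauN R) := (tauN_contDiff R).continuous
theorem tauN_one {R : ℕ} {q : ℝ} (h : q ≤ R + 1) : tauN R q = 1 := by
  refine tau_one ?_
  have hN : (0 : ℝ) < (R : ℝ) + 1 := by positivity
  rw [inv_mul_le_iff₀ hN]; linarith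
theorem tauN_zero {R : ℕ} {q : ℝ} (h : 2 * ((R : ℝ) + 1) ≤ q) : tauN R q = 0 := by
  refine tau_zero ?_
  have hN : (0 : ℝ) < (R : ℝ) + 1 := by positivity
  rw [le_inv_mul_iff₀ hN]; linarith
theorem tauN_deriv_nonpos (R : ℕ) (q : ℝ) : deriv (tauN R) q ≤ 0 := by
  have h : Antitone (tauN R) := fun a b hab => tau_anti (by gcongr)
  exact h.deriv_nonpos

theorem Phi_hasDeriv (p q : ℝ) : HasDerivAt (Phi p) (wgt p q) q :=
  intervalIntegral.integral_hasDerivAt_right ((wgt_cont p).intervalIntegrable _ _)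
    ((wgt_cont p).stronglyMeasurableAtFilter _ _) (wgt_cont p).continuousAt

theorem Phi_cont (p : ℝ) : Continuous (Phi p) :=
  continuous_iff_continuousAt.2 fun q => (Phi_hasDeriv p q).continuousAt

theorem tw_cont (p : ℝ) (R : ℕ) : Continuous (fun s => tauN R s * wgt p s) :=
  (tauN_cont R).mul (wgt_cont p)

theorem PhiR_hasDeriv (p : ℝ) (R : ℕ) (q : ℝ) : HasDerivAt (PhiR p R) (tauN R q * wgt p q) q :=
  intervalIntegral.integral_hasDerivAt_right ((tw_cont p R).intervalIntegrable _ _)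
    ((tw_cont p R).stronglyMeasurableAtFilter _ _) (tw_cont p R).continuousAt

theorem PhiR_deriv (p : ℝ) (R : ℕ) : deriv (PhiR p R) = fun q => tauN R q * wgt p q := by
  ext q; exact (PhiR_hasDeriv p R q).deriv

theorem PhiR_contDiff (p : ℝ) (R : ℕ) : ContDiff ℝ 2 (PhiR p R) := by
  have : ContDiff ℝ (1 + 1) (PhiR p R) := by
    rw [contDiff_succ_iff_deriv]
    refine ⟨fun q => (PhiR_hasDeriv p R q).differentiableAt, by simp, ?_⟩
    rw [PhiR_deriv]
    exact ((tauN_contDiff R).mul (wgt_contDiff p)).of_le (by norm_num)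
  rwa [one_add_one_eq_two] at this

theorem PhiR_deriv2_le {p : ℝ} (hp : 2 ≤ p) (R : ℕ) {q : ℝ} (hq : 0 ≤ q) :
    (1 + q) * deriv (deriv (PhiR p R)) q ≤ (p - 2) * (tauN R q * wgt p q) := by
  rw [PhiR_deriv]
  have h1 := (((tauN_contDiff R).differentiable (by norm_num)) q).hasDerivAt
  have h2 := (((wgt_contDiff p).differentiable (by norm_num)) q).hasDerivAt
  have hd : deriv (fun q => tauN R q * wgt p q) q =
      deriv (tauN R) q * wgt p q + tauN R q * deriv (wgt p) q := (h1.mul h2).deriv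
  rw [hd]
  have h3 := wgt_deriv_le hp hq
  have h4 := tauN_deriv_nonpos R q
  have h5 := tauN_nonneg R q
  have h6 := wgt_pos p q
  have h7 : (1 + q) * (deriv (tauN R) q * wgt p q) ≤ 0 := by
    have : 0 ≤ (1 + q) * (-deriv (tauN R) q * wgt p q) := by
      have : 0 ≤ -deriv (tauN R) q := by linarith
      positivity
    linarith
  have h8 := mul_le_mul_of_nonneg_left h3 h5
  linarith

theorem Phi_zero (p : ℝ) : Phi p 0 = 0 := by simp [Phi]
theorem PhiR_zero (p : ℝ) (R : ℕ) : PhiR p R 0 = 0 := by simp [PhiR]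

theorem Phi_nonneg (p : ℝ) {q : ℝ} (hq : 0 ≤ q) : 0 ≤ Phi p q :=
  intervalIntegral.integral_nonneg hq fun s _ => (wgt_pos p s).le
theorem PhiR_nonneg (p : ℝ) (R : ℕ) {q : ℝ} (hq : 0 ≤ q) : 0 ≤ PhiR p R q :=
  intervalIntegral.integral_nonneg hq fun s _ => mul_nonneg (tauN_nonneg R s) (wgt_pos p s).le
theorem PhiR_le (p : ℝ) (R : ℕ) {q : ℝ} (hq : 0 ≤ q) : PhiR p R q ≤ Phi p q :=
  intervalIntegral.integral_mono_on hq ((tw_cont p R).intervalIntegrable _ _)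
    ((wgt_cont p).intervalIntegrable _ _) fun s _ =>
      mul_le_of_le_one_left (wgt_pos p s).le (tauN_le_one R s)
theorem PhiR_eq (p : ℝ) (R : ℕ) {q : ℝ} (hq : 0 ≤ q) (h : q ≤ R + 1) : PhiR p R q = Phi p q := by
  refine intervalIntegral.integral_congr fun s hs => ?_
  rw [Set.uIcc_of_le hq] at hs
  simp [tauN_one (hs.2.trans h)]
theorem PhiR_const (p : ℝ) (R : ℕ) {q : ℝ} (h : 2 * ((R : ℝ) + 1) ≤ q) :
    PhiR p R q = PhiR p R (2 * (R + 1)) := by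
  have h1 := intervalIntegral.integral_add_adjacent_intervals
    ((tw_cont p R).intervalIntegrable (μ := volume) 0 (2 * ((R : ℝ) + 1)))
    ((tw_cont p R).intervalIntegrable (μ := volume) (2 * ((R : ℝ) + 1)) q)
  have h2 : ∫ s in (2 * ((R : ℝ) + 1))..q, tauN R s * wgt p s = 0 := by
    rw [intervalIntegral.integral_congr (g := fun _ => (0 : ℝ)) fun s hs => ?_]
    · simp
    · rw [Set.uIcc_of_le h] at hs
      simp [tauN_zero hs.1]
  rw [h2, add_zero] at h1
  exact h1.symm

theorem Phi_le {p : ℝ} (hp : 2 ≤ p) {q : ℝ} (hq : 0 ≤ q) : Phi p q ≤ q * wgt p q := by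
  have : Phi p q ≤ ∫ s in (0 : ℝ)..q, wgt p q :=
    intervalIntegral.integral_mono_on hq ((wgt_cont p).intervalIntegrable _ _)
      (continuous_const.intervalIntegrable _ _) fun s hs => wgt_mono hp hs.1 hs.2
  simpa using this

theorem Phi_le_pow {p : ℝ} (hp : 2 ≤ p) {q : ℝ} (hq : 0 ≤ q) :
    Phi p q ≤ wgt p 1 * (1 + q ^ (p / 2)) := by
  refine (Phi_le hp hq).trans ?_
  have h0 : 0 < wgt p 1 := wgt_pos p 1
  have h1 : 0 ≤ q ^ (p / 2) := by positivity
  rcases le_total q 1 with h | h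
  · have := wgt_mono hp hq h
    have h2 := wgt_pos p q
    nlinarith [mul_nonneg h0.le h1]
  · have : wgt p q ≤ wgt p 1 * q ^ ((p - 2) / 2) := by
      unfold wgt
      have e : q ^ ((p - 2) / 2) = (q ^ 2) ^ ((p - 2) / 4) := by
        rw [← Real.rpow_natCast q 2, ← Real.rpow_mul hq]; congr 1; push_cast; ring
      rw [e, ← Real.mul_rpow (by positivity) (by positivity)]
      refine Real.rpow_le_rpow (by positivity) ?_ (by linarith)
      nlinarith
    have e2 : q * q ^ ((p - 2) / 2) = q ^ (p / 2) := by
      have h3 : 0 < q := by linarith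
      nth_rewrite 1 [← Real.rpow_one q]
      rw [← Real.rpow_add h3]; congr 1; ring
    calc q * wgt p q ≤ q * (wgt p 1 * q ^ ((p - 2) / 2)) := by gcongr
      _ = wgt p 1 * (q * q ^ ((p - 2) / 2)) := by ring
      _ ≤ _ := by rw [e2]; nlinarith

theorem pow_le_Phi {p : ℝ} (hp : 2 ≤ p) {q : ℝ} (hq : 0 ≤ q) :
    q ^ (p / 2) ≤ (p / 2) * Phi p q := by
  have h1 : ∫ s in (0 : ℝ)..q, s ^ ((p - 2) / 2) ≤ Phi p q := by
    refine intervalIntegral.integral_mono_on hq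
      (intervalIntegral.intervalIntegrable_rpow' (by linarith))
      ((wgt_cont p).intervalIntegrable _ _) fun s hs => ?_
    unfold wgt
    have e : s ^ ((p - 2) / 2) = (s ^ 2) ^ ((p - 2) / 4) := by
      rw [← Real.rpow_natCast s 2, ← Real.rpow_mul hs.1]; congr 1; push_cast; ring
    rw [e]
    exact Real.rpow_le_rpow (by positivity) (by linarith) (by linarith)
  rw [integral_rpow (Or.inl (by linarith))] at h1
  have e : (p - 2) / 2 + 1 = p / 2 := by ring
  rw [e, Real.zero_rpow (by linarith), sub_zero, div_le_iff₀ (by linarith)] at h1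
  linarith


theorem young_pow {ς : ℝ} (hς : ς ∈ Set.Ioo (0 : ℝ) 1) {η : ℝ} (hη : 0 < η) :
    ∃ c : ℝ, 0 ≤ c ∧ ∀ r : ℝ, 0 ≤ r → (r ^ ς) ^ 2 ≤ c + η * r ^ 2 := by
  have h := (tendsto_rpow_neg_atTop (y := 1 - ς) (by linarith [hς.2])).eventually_le_const
    (Real.sqrt_pos.2 hη)
  obtain ⟨r0, hr0⟩ := eventually_atTop.1 (h.and (eventually_gt_atTop 0))
  refine ⟨((max r0 0) ^ ς) ^ 2, by positivity, fun r hr => ?_⟩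
  rcases le_total r (max r0 0) with h1 | h1
  · have : r ^ ς ≤ (max r0 0) ^ ς := Real.rpow_le_rpow hr h1 hς.1.le
    have h2 : (r ^ ς) ^ 2 ≤ ((max r0 0) ^ ς) ^ 2 := by gcongr
    have : 0 ≤ η * r ^ 2 := by positivity
    linarith
  · obtain ⟨h4, h5⟩ := hr0 r ((le_max_left _ _).trans h1)
    have h2 : r ^ ς ≤ Real.sqrt η * r := by
      have e : r ^ ς = r ^ (-(1 - ς)) * r := by
        rw [← Real.rpow_add_one h5.ne']; congr 1; ring
      rw [e]; gcongr
    have h3 : (r ^ ς) ^ 2 ≤ (Real.sqrt η * r) ^ 2 := by gcongr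
    rw [mul_pow, Real.sq_sqrt hη.le] at h3
    have : 0 ≤ ((max r0 0) ^ ς) ^ 2 := by positivity
    linarith

theorem drift_bound {n m d : ℕ} {C : Coeffs n m d} (SAh : SA13 C) {T : ℝ} (hT : 0 ≤ T) :
    ∃ C1 : ℝ, 0 ≤ C1 ∧ ∃ δ : ℝ, 0 < δ ∧ ∀ ε : ℝ, Real.sqrt ε ≤ δ → ∀ x μ y, memP2 μ →
      2 * ⟪C.f x μ y, y⟫ + 2 * (Real.sqrt ε * ⟪C.h x μ y, y⟫) + T * ‖C.g x μ y‖ ^ 2 ≤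
        C1 - SAh.γ / 2 * ‖y‖ ^ 2 := by
  obtain ⟨γ, hγe⟩ : ∃ γ, γ = SAh.γ := ⟨_, rfl⟩
  have hγ : 0 < γ := hγe ▸ SAh.hγ
  obtain ⟨G, hG⟩ : ∃ G, G = |SAh.CG| := ⟨_, rfl⟩
  have hG0 : 0 ≤ G := hG ▸ abs_nonneg _
  obtain ⟨c, hc0, hc⟩ := young_pow SAh.hς (η := γ / (8 * (T * 2 * G ^ 2 + 1))) (by positivity)
  refine ⟨T * 2 * G ^ 2 * (1 + c) + 16 * G ^ 2 / γ + γ, by positivity, γ / (16 * (G + 1)), by positivity,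
    fun ε hε x μ y hμ => ?_⟩
  have hs := Real.sqrt_nonneg ε
  set s := Real.sqrt ε
  have hr : 0 ≤ ‖y‖ := norm_nonneg y
  have hc' := hc ‖y‖ hr
  have hdis := SAh.dissip x μ y 0 hμ
  have hgr := SAh.growth x μ y hμ
  have hgr0 := SAh.growth x μ 0 hμ
  have hgg := SAh.growthg x μ y hμ
  rw [← hγe] at hdis
  rw [← hγe]
  have hcg := le_abs_self SAh.CG
  rw [← hG] at hcg
  simp only [sub_zero, inner_sub_left] at hdis
  have hf0 : ‖C.f x μ 0‖ ≤ G := by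
    have a1 := norm_nonneg (C.K x μ 0)
    have a3 := norm_nonneg (C.h x μ 0)
    have a4 := norm_nonneg (C.σ x μ 0)
    simp only [norm_zero, add_zero, mul_one] at hgr0
    linarith
  have hh : ‖C.h x μ y‖ ≤ G * (1 + ‖y‖) := by
    have a1 := norm_nonneg (C.K x μ y)
    have a3 := norm_nonneg (C.f x μ y)
    have a4 := norm_nonneg (C.σ x μ y)
    have : SAh.CG * (1 + ‖y‖) ≤ G * (1 + ‖y‖) := by gcongr
    linarith
  have hg : ‖C.g x μ y‖ ^ 2 ≤ 2 * G ^ 2 * (1 + (‖y‖ ^ SAh.ς) ^ 2) := by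
    have h0 : 0 ≤ ‖y‖ ^ SAh.ς := by positivity
    have h1 : ‖C.g x μ y‖ ≤ G * (1 + ‖y‖ ^ SAh.ς) := hgg.trans (by gcongr)
    calc ‖C.g x μ y‖ ^ 2 ≤ (G * (1 + ‖y‖ ^ SAh.ς)) ^ 2 := by gcongr
      _ = G ^ 2 * (1 + ‖y‖ ^ SAh.ς) ^ 2 := by ring
      _ ≤ G ^ 2 * (2 * (1 + (‖y‖ ^ SAh.ς) ^ 2)) := by
        gcongr
        nlinarith [sq_nonneg (1 - ‖y‖ ^ SAh.ς)]
      _ = _ := by ring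
  have i1 : ⟪C.f x μ 0, y⟫ ≤ G * ‖y‖ :=
    (real_inner_le_norm _ _).trans (mul_le_mul_of_nonneg_right hf0 hr)
  have i2 : ⟪C.h x μ y, y⟫ ≤ G * (1 + ‖y‖) * ‖y‖ :=
    (real_inner_le_norm _ _).trans (mul_le_mul_of_nonneg_right hh hr)
  obtain ⟨r, hrr⟩ : ∃ r, r = ‖y‖ := ⟨_, rfl⟩
  rw [← hrr] at hr hc' hdis hg i1 i2 ⊢
  have j2 : s * ⟪C.h x μ y, y⟫ ≤ γ / 16 * ((1 + r) * r) := by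
    have k1 : s * G ≤ γ / 16 := by
      have : s * G ≤ γ / (16 * (G + 1)) * G := mul_le_mul_of_nonneg_right hε hG0
      refine this.trans ?_
      rw [div_mul_eq_mul_div, div_le_div_iff₀ (by positivity) (by norm_num)]
      nlinarith
    calc s * ⟪C.h x μ y, y⟫ ≤ s * (G * (1 + r) * r) := mul_le_mul_of_nonneg_left i2 hs
      _ = (s * G) * ((1 + r) * r) := by ring
      _ ≤ _ := by gcongr
  have j3 : T * ‖C.g x μ y‖ ^ 2 ≤ T * 2 * G ^ 2 * (1 + c) + γ / 8 * r ^ 2 := by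
    have k0 : 0 ≤ T * 2 * G ^ 2 := by positivity
    have k1 : T * 2 * G ^ 2 * (γ / (8 * (T * 2 * G ^ 2 + 1))) ≤ γ / 8 := by
      rw [mul_div_assoc', div_le_div_iff₀ (by positivity) (by norm_num)]
      nlinarith
    calc T * ‖C.g x μ y‖ ^ 2 ≤ T * (2 * G ^ 2 * (1 + (r ^ SAh.ς) ^ 2)) := by gcongr
      _ = T * 2 * G ^ 2 + T * 2 * G ^ 2 * (r ^ SAh.ς) ^ 2 := by ring
      _ ≤ T * 2 * G ^ 2 + T * 2 * G ^ 2 * (c + γ / (8 * (T * 2 * G ^ 2 + 1)) * r ^ 2) := by gcongr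
      _ = T * 2 * G ^ 2 * (1 + c) +
          (T * 2 * G ^ 2 * (γ / (8 * (T * 2 * G ^ 2 + 1)))) * r ^ 2 := by ring
      _ ≤ _ := by gcongr
  have j1 : 2 * (G * r) ≤ 16 * G ^ 2 / γ + γ / 16 * r ^ 2 := by
    have : 0 ≤ (4 * G - γ / 4 * r) ^ 2 / γ := by positivity
    have e : (4 * G - γ / 4 * r) ^ 2 / γ = 16 * G ^ 2 / γ + γ / 16 * r ^ 2 - 2 * (G * r) := by
      field_simp; ring
    linarith
  have j4 : γ / 8 * r ≤ γ + γ / 16 * r ^ 2 := by nlinarith [mul_nonneg hγ.le (sq_nonneg (r - 1))]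
  have j5 : 0 ≤ ‖C.g x μ y - C.g x μ 0‖ ^ 2 := by positivity
  have j6 := mul_nonneg hγ.le (sq_nonneg r)
  linarith


/-- compactly supported Lyapunov test function -/
def psiR {k : ℕ} (p : ℝ) (R : ℕ) (y : Vec k) : ℝ :=
  PhiR p R (‖y‖ ^ 2) - PhiR p R (2 * (R + 1))

theorem psiR_testFun {k : ℕ} (p : ℝ) (R : ℕ) : TestFun (psiR (k := k) p R) := by
  have hR : (0 : ℝ) ≤ R := Nat.cast_nonneg R
  constructor
  · exact ((PhiR_contDiff p R).comp (contDiff_norm_sq ℝ)).sub contDiff_const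
  · refine HasCompactSupport.of_support_subset_isCompact
      (isCompact_closedBall (0 : Vec k) (2 * (R + 1))) fun y hy => ?_
    by_contra hc
    apply hy
    rw [mem_closedBall_zero_iff, not_le] at hc
    unfold psiR
    rw [PhiR_const p R (q := ‖y‖ ^ 2) (by nlinarith), sub_self]

theorem genY_radial {n m d : ℕ} (C : Coeffs n m d) {ε : ℝ} (hε : 0 < ε) (μ : Measure (Vec n))
    {Φ : ℝ → ℝ} (hΦ : ContDiff ℝ 2 Φ) (x : Vec n) (y : Vec m) :
    genY C ε μ (fun y => Φ (‖y‖ ^ 2)) x y =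
      ε⁻¹ * (deriv Φ (‖y‖ ^ 2) * (2 * ⟪C.f x μ y, y⟫ + 2 * (Real.sqrt ε * ⟪C.h x μ y, y⟫) +
        trCLM ((C.g x μ y).comp (adj (C.g x μ y)))) +
        2 * deriv (deriv Φ) (‖y‖ ^ 2) * ‖adj (C.g x μ y) y‖ ^ 2) := by
  have hs : (Real.sqrt ε)⁻¹ = ε⁻¹ * Real.sqrt ε := by
    have h1 := Real.sqrt_pos.2 hε
    have h2 := Real.mul_self_sqrt hε.le
    rw [eq_inv_mul_iff_mul_eq₀ hε.ne', mul_inv_eq_iff_eq_mul₀ h1.ne', h2]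
  unfold genY
  rw [grad_radial hΦ, hess_radial hΦ, ContinuousLinearMap.comp_add, ContinuousLinearMap.comp_smul,
    ContinuousLinearMap.comp_smul, ← trL_apply, map_add, map_smul, map_smul, trL_apply, trL_apply,
    trCLM_outer, inner_gadj, ContinuousLinearMap.comp_id, hs]
  simp only [smul_eq_mul, inner_add_left,
    real_inner_smul_left, real_inner_smul_right]
  field_simp
  ring

theorem lyap {n m d : ℕ} {C : Coeffs n m d} (SAh : SA13 C) {p : ℝ} (hp : 2 ≤ p) :
    ∃ C2 : ℝ, 0 ≤ C2 ∧ ∃ δ : ℝ, 0 < δ ∧ ∀ ε : ℝ, 0 < ε → Real.sqrt ε ≤ δ →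
      ∀ (R : ℕ) μ x y, memP2 μ → genY C ε μ (psiR p R) x y ≤
        ε⁻¹ * (C2 - SAh.γ / 4 * (tauN R (‖y‖ ^ 2) * Phi p (‖y‖ ^ 2))) := by
  have hp0 : 0 ≤ p - 2 := by linarith
  obtain ⟨C1, hC1, δ, hδ, hb⟩ := drift_bound SAh (T := ‖trL m‖ + 2 * (p - 2)) (by positivity)
  have hγ := SAh.hγ
  refine ⟨wgt p (4 * C1 / SAh.γ) * C1, mul_nonneg (wgt_pos _ _).le hC1, δ, hδ,
    fun ε hε hεδ R μ x y hμ => ?_⟩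
  have hΦ : ContDiff ℝ 2 (fun q => PhiR p R q - PhiR p R (2 * (R + 1))) :=
    (PhiR_contDiff p R).sub contDiff_const
  have hd : deriv (fun q => PhiR p R q - PhiR p R (2 * (R + 1))) = deriv (PhiR p R) := by
    ext q; simp
  have e := genY_radial C hε μ hΦ x y
  rw [hd] at e
  change genY C ε μ (fun y => PhiR p R (‖y‖ ^ 2) - PhiR p R (2 * (R + 1))) x y ≤ _
  rw [e]
  refine mul_le_mul_of_nonneg_left ?_ (inv_nonneg.2 hε.le)
  have hq : 0 ≤ ‖y‖ ^ 2 := by positivity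
  have hc := PhiR_deriv2_le hp R hq
  have hb' := hb ε hεδ x μ y hμ
  have hw := Phi_le hp hq
  have htr : trCLM ((C.g x μ y).comp (adj (C.g x μ y))) ≤ ‖trL m‖ * ‖C.g x μ y‖ ^ 2 := by
    have h1 := (le_abs_self _).trans (trCLM_le ((C.g x μ y).comp (adj (C.g x μ y))))
    refine h1.trans ?_
    gcongr
    refine (ContinuousLinearMap.opNorm_comp_le _ _).trans ?_
    rw [norm_adj, sq]
  have hgy : ‖adj (C.g x μ y) y‖ ^ 2 ≤ ‖C.g x μ y‖ ^ 2 * ‖y‖ ^ 2 := by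
    have := (adj (C.g x μ y)).le_opNorm y
    rw [norm_adj] at this
    calc _ ≤ (‖C.g x μ y‖ * ‖y‖) ^ 2 := by gcongr
      _ = _ := by ring
  have hgy0 : 0 ≤ ‖adj (C.g x μ y) y‖ ^ 2 := by positivity
  have ht0 := tauN_nonneg R (‖y‖ ^ 2)
  have ht1 := tauN_le_one R (‖y‖ ^ 2)
  have hw0 := wgt_pos p (‖y‖ ^ 2)
  have hda : deriv (PhiR p R) (‖y‖ ^ 2) = tauN R (‖y‖ ^ 2) * wgt p (‖y‖ ^ 2) := by
    rw [PhiR_deriv]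
  have hw1 : wgt p (‖y‖ ^ 2) * (C1 - SAh.γ / 4 * ‖y‖ ^ 2) ≤ wgt p (4 * C1 / SAh.γ) * C1 := by
    rcases le_total (‖y‖ ^ 2) (4 * C1 / SAh.γ) with h | h
    · have h1 := wgt_mono hp hq h
      calc _ ≤ wgt p (‖y‖ ^ 2) * C1 := by
            refine mul_le_mul_of_nonneg_left ?_ hw0.le
            have : 0 ≤ SAh.γ / 4 * ‖y‖ ^ 2 := by positivity
            linarith
        _ ≤ _ := mul_le_mul_of_nonneg_right h1 hC1
    · have h1 : C1 - SAh.γ / 4 * ‖y‖ ^ 2 ≤ 0 := by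
        rw [div_le_iff₀ hγ] at h; linarith
      have h2 := mul_nonneg (wgt_pos p (4 * C1 / SAh.γ)).le hC1
      have h3 := mul_nonneg hw0.le (by linarith : 0 ≤ -(C1 - SAh.γ / 4 * ‖y‖ ^ 2))
      linarith
  rw [hda]
  have hC2 : 0 ≤ wgt p (4 * C1 / SAh.γ) * C1 := mul_nonneg (wgt_pos _ _).le hC1
  generalize deriv (deriv (PhiR p R)) (‖y‖ ^ 2) = c at *
  generalize ‖adj (C.g x μ y) y‖ ^ 2 = u at *
  generalize trCLM ((C.g x μ y).comp (adj (C.g x μ y))) = v at *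
  have hg0 : 0 ≤ ‖C.g x μ y‖ ^ 2 := by positivity
  generalize ‖C.g x μ y‖ ^ 2 = G2 at *
  generalize ⟪C.f x μ y, y⟫ = fi at *
  generalize Real.sqrt ε * ⟪C.h x μ y, y⟫ = hi at *
  generalize ‖y‖ ^ 2 = q at *
  generalize wgt p (4 * C1 / SAh.γ) * C1 = C2 at *
  generalize wgt p q = w at *
  generalize Phi p q = F at *
  generalize tauN R q = τ at *
  have ha0 : 0 ≤ τ * w := mul_nonneg ht0 hw0.le
  have hcu : c * u ≤ (p - 2) * (τ * w) * G2 := by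
    rcases le_total c 0 with h | h
    · have h1 : c * u ≤ 0 := mul_nonpos_of_nonpos_of_nonneg h hgy0
      have h2 : 0 ≤ (p - 2) * (τ * w) * G2 := by positivity
      linarith
    · calc c * u ≤ c * (G2 * q) := mul_le_mul_of_nonneg_left hgy h
        _ ≤ ((1 + q) * c) * G2 := by
          have := mul_nonneg h hg0
          linarith
        _ ≤ _ := mul_le_mul_of_nonneg_right hc hg0
  have s1 : τ * w * (2 * fi + 2 * hi + v) + 2 * c * u ≤ τ * w * (C1 - SAh.γ / 2 * q) := by
    have h1 := mul_le_mul_of_nonneg_left hb' ha0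
    have h2 := mul_le_mul_of_nonneg_left htr ha0
    linarith
  have s2 : τ * (w * (C1 - SAh.γ / 4 * q)) ≤ τ * C2 := mul_le_mul_of_nonneg_left hw1 ht0
  have s3 : SAh.γ / 4 * (τ * F) ≤ SAh.γ / 4 * (τ * (q * w)) := by gcongr
  have s4 : τ * C2 ≤ C2 := mul_le_of_le_one_left hC2 ht1
  linarith


/-! ### Moment bound at good times -/

theorem fatou_bound {Ω : Type} [MeasurableSpace Ω] {P : Measure Ω} {F : ℕ → Ω → ℝ} {f : Ω → ℝ}
    {A : ℝ} (hF : ∀ k, Integrable (F k) P) (hF0 : ∀ k ω, 0 ≤ F k ω) (hfm : AEStronglyMeasurable f P)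
    (hA : ∀ k, ∫ ω, F k ω ∂P ≤ A) (hl : ∀ ω, Tendsto (fun k => F k ω) atTop (𝓝 (f ω))) :
    Integrable f P ∧ ∫ ω, f ω ∂P ≤ A := by
  have hf0 : ∀ ω, 0 ≤ f ω := fun ω => ge_of_tendsto' (hl ω) fun k => hF0 k ω
  have hA0 : 0 ≤ A := (integral_nonneg (hF0 0)).trans (hA 0)
  have h1 : ∫⁻ ω, ENNReal.ofReal (f ω) ∂P ≤ ENNReal.ofReal A := by
    have e : ∀ ω, ENNReal.ofReal (f ω) = liminf (fun k => ENNReal.ofReal (F k ω)) atTop := fun ω =>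
      ((ENNReal.continuous_ofReal.tendsto _).comp (hl ω)).liminf_eq.symm
    simp_rw [e]
    refine (lintegral_liminf_le' fun k => (hF k).aestronglyMeasurable.aemeasurable.ennreal_ofReal).trans ?_
    have h2 : ∀ k, ∫⁻ ω, ENNReal.ofReal (F k ω) ∂P ≤ ENNReal.ofReal A := fun k => by
      rw [← ofReal_integral_eq_lintegral_ofReal (hF k) (ae_of_all _ (hF0 k))]
      exact ENNReal.ofReal_le_ofReal (hA k)
    calc _ ≤ liminf (fun _ : ℕ => ENNReal.ofReal A) atTop :=
          liminf_le_liminf (Eventually.of_forall h2)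
      _ = _ := by simp
  have hi : Integrable f P := by
    refine ⟨hfm, ?_⟩
    rw [hasFiniteIntegral_iff_ofReal (ae_of_all _ hf0)]
    exact h1.trans_lt ENNReal.ofReal_lt_top
  refine ⟨hi, ?_⟩
  rw [← ofReal_integral_eq_lintegral_ofReal hi (ae_of_all _ hf0)] at h1
  exact (ENNReal.ofReal_le_ofReal_iff hA0).1 h1

theorem integral_le_cst {α : Type*} [MeasurableSpace α] {μ : Measure α} [IsFiniteMeasure μ]
    {f : α → ℝ} {K : ℝ} (hK : 0 ≤ K) (h : ∀ a, f a ≤ K) : ∫ a, f a ∂μ ≤ K * μ.real Set.univ := by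
  by_cases hf : Integrable f μ
  · refine (integral_mono hf (integrable_const K) h).trans_eq ?_
    rw [integral_const, smul_eq_mul, mul_comm]
  · rw [integral_undef hf]; positivity

theorem tauPhi_bdd (p : ℝ) (R : ℕ) : ∃ M : ℝ, ∀ q, 0 ≤ q → |tauN R q * Phi p q| ≤ M := by
  obtain ⟨M, hM⟩ := (isCompact_Icc (a := (0 : ℝ)) (b := 2 * (R + 1))).exists_bound_of_continuousOn
    ((tauN_cont R).mul (Phi_cont p)).continuousOn
  refine ⟨M, fun q hq => ?_⟩
  rcases le_total q (2 * (R + 1)) with h | h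
  · exact hM q ⟨hq, h⟩
  · rw [tauN_zero h]
    have := (norm_nonneg _).trans (hM 0 ⟨le_rfl, by positivity⟩)
    simpa using this

theorem PhiR_bdd (p : ℝ) (R : ℕ) {q : ℝ} (hq : 0 ≤ q) : |PhiR p R q| ≤ PhiR p R (2 * (R + 1)) := by
  rw [abs_of_nonneg (PhiR_nonneg p R hq)]
  have hm : Monotone (PhiR p R) := by
    refine monotone_of_deriv_nonneg ((PhiR_contDiff p R).differentiable (by norm_num)) fun s => ?_
    rw [PhiR_deriv]
    exact mul_nonneg (tauN_nonneg R s) (wgt_pos p s).le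
  rcases le_total q (2 * (R + 1)) with h | h
  · exact hm h
  · rw [PhiR_const p R h]

theorem tauN_lim (q : ℝ) : Tendsto (fun R => tauN R q) atTop (𝓝 1) := by
  obtain ⟨N, hN⟩ := exists_nat_ge q
  refine tendsto_const_nhds.congr' ?_
  filter_upwards [eventually_ge_atTop N] with R hR
  have : (N : ℝ) ≤ R := by exact_mod_cast hR
  rw [tauN_one (by linarith)]

theorem PhiR_lim (p : ℝ) {q : ℝ} (hq : 0 ≤ q) : Tendsto (fun R => PhiR p R q) atTop (𝓝 (Phi p q)) := by
  obtain ⟨N, hN⟩ := exists_nat_ge q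
  refine tendsto_const_nhds.congr' ?_
  filter_upwards [eventually_ge_atTop N] with R hR
  have : (N : ℝ) ≤ R := by exact_mod_cast hR
  rw [PhiR_eq p R hq (by linarith)]

section
variable {n m d : ℕ} {C : Coeffs n m d} {ε : ℝ}
    {Ω : Type} [mΩ : MeasurableSpace Ω] {P : Measure Ω}
    {ℱ : Filtration ℝ mΩ} {X : ℝ → Ω → Vec n} {Y : ℝ → Ω → Vec m} {ξ : Ω → Vec n}
    {ζ : Ω → Vec m}

theorem PhiR_int [IsProbabilityMeasure P] (S : IsSFSolution C ε P ℱ X Y ξ ζ) (p : ℝ) (R : ℕ) (t : ℝ) :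
    Integrable (fun ω => PhiR p R (‖Y t ω‖ ^ 2)) P := by
  refine Integrable.of_bound (C := PhiR p R (2 * (R + 1))) ?_ (ae_of_all _ fun ω => PhiR_bdd p R (by positivity))
  exact ((PhiR_contDiff p R).continuous.measurable.comp ((S.measY t).norm.pow_const 2)).aestronglyMeasurable

theorem dynR [IsProbabilityMeasure P] (SAh : SA13 C) (S : IsSFSolution C ε P ℱ X Y ξ ζ)
    {p C2 c : ℝ} (R : ℕ)
    (hly : ∀ μ x y, memP2 μ → genY C ε μ (psiR p R) x y ≤
        ε⁻¹ * (C2 - c * (tauN R (‖y‖ ^ 2) * Phi p (‖y‖ ^ 2))))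
    {s t : ℝ} (hs : 0 ≤ s) (hst : s ≤ t) (ht : GoodT C P X t) :
    ∫ ω, PhiR p R (‖Y t ω‖ ^ 2) ∂P - ∫ ω, PhiR p R (‖Y s ω‖ ^ 2) ∂P ≤
      ∫ r in Set.Ioc s t, ∫ ω, ε⁻¹ * (C2 - c * (tauN R (‖Y r ω‖ ^ 2) * Phi p (‖Y r ω‖ ^ 2))) ∂P := by
  obtain ⟨M, hM⟩ := tauPhi_bdd p R
  have := dynkin_le SAh S (psiR_testFun p R) hs hst ht
    (H := fun y => ε⁻¹ * (C2 - c * (tauN R (‖y‖ ^ 2) * Phi p (‖y‖ ^ 2))))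
    (by have h1 := tauN_cont R
        have h2 := Phi_cont p
        fun_prop) (BH := |ε⁻¹| * (|C2| + |c| * M)) (fun y => ?_) hly
  · refine le_trans (le_of_eq ?_) this
    unfold psiR
    rw [integral_sub (PhiR_int S p R t) (integrable_const _),
      integral_sub (PhiR_int S p R s) (integrable_const _)]
    ring
  · rw [abs_mul]
    refine mul_le_mul_of_nonneg_left ?_ (abs_nonneg _)
    refine (abs_sub _ _).trans ?_
    rw [abs_mul c]
    gcongr
    exact hM _ (by positivity)

theorem pass1 [IsProbabilityMeasure P] (SAh : SA13 C) (S : IsSFSolution C ε P ℱ X Y ξ ζ)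
    {p C2 c : ℝ} (hε : 0 < ε) (hC2 : 0 ≤ C2) (hc : 0 < c)
    (hly : ∀ R μ x y, memP2 μ → genY C ε μ (psiR p R) x y ≤
        ε⁻¹ * (C2 - c * (tauN R (‖y‖ ^ 2) * Phi p (‖y‖ ^ 2))))
    {s t : ℝ} (hs : 0 ≤ s) (hst : s ≤ t) (ht : GoodT C P X t)
    (hi : Integrable (fun ω => Phi p (‖Y s ω‖ ^ 2)) P) :
    Integrable (fun ω => Phi p (‖Y t ω‖ ^ 2)) P ∧
    ∫ ω, Phi p (‖Y t ω‖ ^ 2) ∂P ≤ ∫ ω, Phi p (‖Y s ω‖ ^ 2) ∂P + ε⁻¹ * C2 * (t - s) := by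
  refine fatou_bound (F := fun R ω => PhiR p R (‖Y t ω‖ ^ 2)) (fun R => PhiR_int S p R t)
    (fun R ω => PhiR_nonneg p R (by positivity))
    ((Phi_cont p).measurable.comp ((S.measY t).norm.pow_const 2)).aestronglyMeasurable
    (fun R => ?_) (fun ω => PhiR_lim p (by positivity))
  have h1 := dynR SAh S R (hly R) hs hst ht
  have h2 : ∫ ω, PhiR p R (‖Y s ω‖ ^ 2) ∂P ≤ ∫ ω, Phi p (‖Y s ω‖ ^ 2) ∂P :=
    integral_mono (PhiR_int S p R s) hi fun ω => PhiR_le p R (by positivity)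
  obtain ⟨M, hM⟩ := tauPhi_bdd p R
  have h3 : ∀ r, ∫ ω, ε⁻¹ * (C2 - c * (tauN R (‖Y r ω‖ ^ 2) * Phi p (‖Y r ω‖ ^ 2))) ∂P ≤ ε⁻¹ * C2 := by
    intro r
    have h0 : ∀ ω, 0 ≤ c * (tauN R (‖Y r ω‖ ^ 2) * Phi p (‖Y r ω‖ ^ 2)) := fun ω =>
      mul_nonneg hc.le (mul_nonneg (tauN_nonneg _ _) (Phi_nonneg p (by positivity)))
    have hK : 0 ≤ ε⁻¹ * C2 := by positivity
    refine (integral_le_cst hK fun ω => ?_).trans_eq (by simp)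
    have := h0 ω
    gcongr
    linarith
  have h4 : ∫ r in Set.Ioc s t, ∫ ω, ε⁻¹ * (C2 - c * (tauN R (‖Y r ω‖ ^ 2) * Phi p (‖Y r ω‖ ^ 2))) ∂P
      ≤ ε⁻¹ * C2 * (t - s) := by
    have hK : 0 ≤ ε⁻¹ * C2 := by positivity
    refine (integral_le_cst hK h3).trans_eq ?_
    rw [measureReal_restrict_apply_univ, Real.volume_real_Ioc_of_le hst]
  linarith

theorem pass2 [IsProbabilityMeasure P] (SAh : SA13 C) (S : IsSFSolution C ε P ℱ X Y ξ ζ)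
    {p C2 c : ℝ} (hε : 0 < ε) (hC2 : 0 ≤ C2) (hc : 0 < c)
    (hly : ∀ R μ x y, memP2 μ → genY C ε μ (psiR p R) x y ≤
        ε⁻¹ * (C2 - c * (tauN R (‖y‖ ^ 2) * Phi p (‖y‖ ^ 2))))
    {s t : ℝ} (hs : 0 ≤ s) (hst : s ≤ t) (ht : GoodT C P X t)
    (hi : Integrable (fun ω => Phi p (‖Y s ω‖ ^ 2)) P) :
    ∫ ω, Phi p (‖Y t ω‖ ^ 2) ∂P - ∫ ω, Phi p (‖Y s ω‖ ^ 2) ∂P ≤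
      ∫ r in Set.Ioc s t, ε⁻¹ * (C2 - c * ∫ ω, Phi p (‖Y r ω‖ ^ 2) ∂P) := by
  have hp1 : ∀ r, s ≤ r → r ≤ t → _ := fun r hsr hrt =>
    pass1 SAh S hε hC2 hc hly hs hsr (ht.mono hrt) hi
  have hm : ∀ R : ℕ, Measurable (Function.uncurry fun r ω =>
      tauN R (‖Y r ω‖ ^ 2) * Phi p (‖Y r ω‖ ^ 2)) := by
    intro R
    have h1 : Measurable (Function.uncurry fun r ω => ‖Y r ω‖ ^ 2) :=
      (measurable_uncurry_of_continuous_of_measurable S.contY S.measY).norm.pow_const 2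
    exact ((tauN_cont R).measurable.comp h1).mul ((Phi_cont p).measurable.comp h1)
  have hmr : ∀ (R : ℕ) r, Measurable fun ω =>
      tauN R (‖Y r ω‖ ^ 2) * Phi p (‖Y r ω‖ ^ 2) := fun R r => (hm R).of_uncurry_left
  have h0 : ∀ (R : ℕ) r ω, 0 ≤ tauN R (‖Y r ω‖ ^ 2) * Phi p (‖Y r ω‖ ^ 2) := fun R r ω =>
    mul_nonneg (tauN_nonneg _ _) (Phi_nonneg p (by positivity))
  have hle : ∀ (R : ℕ) r ω, tauN R (‖Y r ω‖ ^ 2) * Phi p (‖Y r ω‖ ^ 2) ≤ Phi p (‖Y r ω‖ ^ 2) :=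
    fun R r ω => mul_le_of_le_one_left (Phi_nonneg p (by positivity)) (tauN_le_one _ _)
  have hin : ∀ r, s ≤ r → r ≤ t → Tendsto (fun R : ℕ => ∫ ω,
      tauN R (‖Y r ω‖ ^ 2) * Phi p (‖Y r ω‖ ^ 2) ∂P) atTop (𝓝 (∫ ω, Phi p (‖Y r ω‖ ^ 2) ∂P)) := by
    intro r h1 h2
    refine tendsto_integral_of_dominated_convergence _ (fun R => (hmr R r).aestronglyMeasurable)
      (hp1 r h1 h2).1 (fun R => ae_of_all _ fun ω => ?_) (ae_of_all _ fun ω => ?_)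
    · rw [Real.norm_eq_abs, abs_of_nonneg (h0 R r ω)]
      exact hle R r ω
    · simpa using (tauN_lim (‖Y r ω‖ ^ 2)).mul_const (Phi p (‖Y r ω‖ ^ 2))
  have hPl : ∀ r, s ≤ r → r ≤ t → Tendsto (fun R : ℕ => ∫ ω,
      PhiR p R (‖Y r ω‖ ^ 2) ∂P) atTop (𝓝 (∫ ω, Phi p (‖Y r ω‖ ^ 2) ∂P)) := by
    intro r h1 h2
    refine tendsto_integral_of_dominated_convergence _
      (fun R => (PhiR_int S p R r).aestronglyMeasurable)
      (hp1 r h1 h2).1 (fun R => ae_of_all _ fun ω => ?_) (ae_of_all _ fun ω => ?_)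
    · rw [Real.norm_eq_abs, abs_of_nonneg (PhiR_nonneg p R (by positivity))]
      exact PhiR_le p R (by positivity)
    · exact PhiR_lim p (by positivity)
  have hsplit : ∀ (R : ℕ) r, s ≤ r → r ≤ t →
      ∫ ω, ε⁻¹ * (C2 - c * (tauN R (‖Y r ω‖ ^ 2) * Phi p (‖Y r ω‖ ^ 2))) ∂P =
      ε⁻¹ * (C2 - c * ∫ ω, tauN R (‖Y r ω‖ ^ 2) * Phi p (‖Y r ω‖ ^ 2) ∂P) := by
    intro R r h1 h2
    have h_integ : Integrable (fun ω => tauN R (‖Y r ω‖ ^ 2) * Phi p (‖Y r ω‖ ^ 2)) P := by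
      refine (hp1 r h1 h2).1.mono' (hmr R r).aestronglyMeasurable (ae_of_all _ fun ω => ?_)
      rw [Real.norm_eq_abs, abs_of_nonneg (h0 R r ω)]
      exact hle R r ω
    rw [integral_const_mul, integral_sub (integrable_const _) (h_integ.const_mul c),
      integral_const_mul]
    simp
  have hK : ∀ (R : ℕ) r, s ≤ r → r ≤ t →
      ∫ ω, tauN R (‖Y r ω‖ ^ 2) * Phi p (‖Y r ω‖ ^ 2) ∂P ≤
        ∫ ω, Phi p (‖Y s ω‖ ^ 2) ∂P + ε⁻¹ * C2 * (t - s) := by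
    intro R r h1 h2
    refine (integral_mono_of_nonneg (ae_of_all _ (h0 R r)) (hp1 r h1 h2).1
      (ae_of_all _ (hle R r))).trans ((hp1 r h1 h2).2.trans ?_)
    gcongr
  set K := ∫ ω, Phi p (‖Y s ω‖ ^ 2) ∂P + ε⁻¹ * C2 * (t - s)
  have hout : Tendsto (fun R : ℕ => ∫ r in Set.Ioc s t,
      ε⁻¹ * (C2 - c * ∫ ω, tauN R (‖Y r ω‖ ^ 2) * Phi p (‖Y r ω‖ ^ 2) ∂P)) atTop
      (𝓝 (∫ r in Set.Ioc s t, ε⁻¹ * (C2 - c * ∫ ω, Phi p (‖Y r ω‖ ^ 2) ∂P))) := by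
    refine tendsto_integral_of_dominated_convergence (fun _ => ε⁻¹ * (C2 + c * K))
      (fun R => ?_) (integrable_const _) (fun R => ?_) ?_
    · have h1 : Measurable fun r => ∫ ω, tauN R (‖Y r ω‖ ^ 2) * Phi p (‖Y r ω‖ ^ 2) ∂P :=
        ((hm R).stronglyMeasurable.integral_prod_right (ν := P)).measurable
      exact (((h1.const_mul c).const_sub C2).const_mul ε⁻¹).aestronglyMeasurable
    · refine (ae_restrict_mem measurableSet_Ioc).mono fun r hr => ?_
      have h1 := hK R r hr.1.le hr.2
      have h2 : 0 ≤ ∫ ω, tauN R (‖Y r ω‖ ^ 2) * Phi p (‖Y r ω‖ ^ 2) ∂P := integral_nonneg (h0 R r)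
      have h3 := mul_le_mul_of_nonneg_left h1 hc.le
      have h4 := mul_nonneg hc.le h2
      rw [Real.norm_eq_abs, abs_mul, abs_of_pos (inv_pos.2 hε)]
      refine mul_le_mul_of_nonneg_left ?_ (inv_pos.2 hε).le
      rw [abs_le]
      constructor <;> linarith
    · refine (ae_restrict_mem measurableSet_Ioc).mono fun r hr => ?_
      exact (((hin r hr.1.le hr.2).const_mul c).const_sub C2).const_mul ε⁻¹
  refine le_of_tendsto_of_tendsto' ((hPl t hst le_rfl).sub (hPl s le_rfl hst)) hout fun R => ?_
  refine (dynR SAh S R (hly R) hs hst ht).trans_eq ?_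
  refine setIntegral_congr_fun measurableSet_Ioc fun r hr => ?_
  exact hsplit R r hr.1.le hr.2

theorem good_bound [IsProbabilityMeasure P] (SAh : SA13 C) (S : IsSFSolution C ε P ℱ X Y ξ ζ)
    {p C2 c K : ℝ} (hε : 0 < ε) (hC2 : 0 ≤ C2) (hc : 0 < c)
    (hly : ∀ R μ x y, memP2 μ → genY C ε μ (psiR p R) x y ≤
        ε⁻¹ * (C2 - c * (tauN R (‖y‖ ^ 2) * Phi p (‖y‖ ^ 2))))
    {t : ℝ} (ht0 : 0 ≤ t) (ht : GoodT C P X t)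
    (hi : Integrable (fun ω => Phi p (‖Y 0 ω‖ ^ 2)) P)
    (hK0 : ∫ ω, Phi p (‖Y 0 ω‖ ^ 2) ∂P ≤ K) (hK : C2 ≤ c * K) :
    Integrable (fun ω => Phi p (‖Y t ω‖ ^ 2)) P ∧ ∫ ω, Phi p (‖Y t ω‖ ^ 2) ∂P ≤ K := by
  have hI : ∀ r, 0 ≤ r → r ≤ t → Integrable (fun ω => Phi p (‖Y r ω‖ ^ 2)) P := fun r h1 h2 =>
    (pass1 SAh S hε hC2 hc hly le_rfl h1 (ht.mono h2) hi).1
  refine ⟨hI t ht0 le_rfl, ?_⟩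
  set U : ℝ → ℝ := fun r => ∫ ω, Phi p (‖Y r ω‖ ^ 2) ∂P with hU
  have u1 : ∀ s r, 0 ≤ s → s ≤ r → r ≤ t → U r ≤ U s + ε⁻¹ * C2 * (r - s) := fun s r h0 h1 h2 =>
    (pass1 SAh S hε hC2 hc hly h0 h1 (ht.mono h2) (hI s h0 (h1.trans h2))).2
  set A : Set ℝ := {s | s ∈ Set.Icc 0 t ∧ U s ≤ K} with hA
  have hA0 : (0 : ℝ) ∈ A := ⟨⟨le_rfl, ht0⟩, hK0⟩
  have hAb : BddAbove A := ⟨t, fun s hs => hs.1.2⟩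
  set s0 := sSup A with hs0
  have h0s : 0 ≤ s0 := le_csSup hAb hA0
  have hst : s0 ≤ t := csSup_le ⟨0, hA0⟩ fun s hs => hs.1.2
  have u2 : U t ≤ U s0 := by
    have h1 := pass2 SAh S hε hC2 hc hly h0s hst ht (hI s0 h0s hst)
    have h2 : ∫ r in Set.Ioc s0 t, ε⁻¹ * (C2 - c * U r) ≤ 0 := by
      refine setIntegral_nonpos measurableSet_Ioc fun r hr => ?_
      have h3 : K < U r := by
        by_contra hcon
        have : r ∈ A := ⟨⟨h0s.trans hr.1.le, hr.2⟩, not_lt.1 hcon⟩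
        exact absurd (le_csSup hAb this) (not_le.2 hr.1)
      have h4 := mul_lt_mul_of_pos_left h3 hc
      exact mul_nonpos_of_nonneg_of_nonpos (inv_pos.2 hε).le (by linarith)
    have h3 := h1.trans h2
    exact sub_nonpos.1 h3
  refine le_of_forall_pos_le_add fun η hη => ?_
  have hD : 0 ≤ ε⁻¹ * C2 := by positivity
  obtain ⟨s, hsA, hs⟩ := exists_lt_of_lt_csSup ⟨0, hA0⟩
    (show s0 - η / (ε⁻¹ * C2 + 1) < s0 by linarith [div_pos hη (by linarith : 0 < ε⁻¹ * C2 + 1)])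
  have h1 := u1 s s0 hsA.1.1 (le_csSup hAb hsA) hst
  have h2 : ε⁻¹ * C2 * (s0 - s) ≤ η := by
    have h3 : s0 - s ≤ η / (ε⁻¹ * C2 + 1) := by linarith
    rw [le_div_iff₀ (by linarith)] at h3
    have := le_csSup hAb hsA
    linarith
  have := hsA.2
  change U t ≤ K + η
  linarith
end


section
variable {n m d : ℕ} {C : Coeffs n m d} {ε : ℝ}
    {Ω : Type} [mΩ : MeasurableSpace Ω] {P : Measure Ω}
    {ℱ : Filtration ℝ mΩ} {X : ℝ → Ω → Vec n} {Y : ℝ → Ω → Vec m} {ξ : Ω → Vec n}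
    {ζ : Ω → Vec m}

theorem path_nonint [IsProbabilityMeasure P] (SAh : SA13 C)
    (S : IsSFSolution C ε P ℱ X Y ξ ζ) {φ : Vec n → Vec m → ℝ}
    (hφ : ContDiff ℝ 2 (Function.uncurry φ)) (ω : Ω) {T0 : ℝ} {i : Fin n}
    (hgood : ∀ s < T0, GoodT C P X s)
    (hbad : ∀ T > T0, ¬ IntegrableOn (fun s => C.b 0 (P.map (X s)) 0 i) (Set.Ioc 0 T))
    (hnear : ∀ᶠ s in 𝓝 T0, gradient (fun x' => φ x' (Y s ω)) (X s ω) =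
      EuclideanSpace.single i (1 : ℝ)) {T : ℝ} (hT : T0 < T) :
    ¬ IntegrableOn (fun s => genSF C ε (P.map (X s)) φ (X s ω) (Y s ω)) (Set.Ioc 0 T) := by
  intro h
  obtain ⟨δ, hδ, hn⟩ := Metric.eventually_nhds_iff.1 hnear
  have h1 := genSF_sub_integrable SAh S hφ ω T
  have h2 : IntegrableOn (fun s => ⟪C.b 0 (P.map (X s)) 0,
      gradient (fun x' => φ x' (Y s ω)) (X s ω)⟫) (Set.Ioc 0 T) := by
    refine (h.sub h1).congr (ae_of_all _ fun s => ?_)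
    simp
  have hT' : T0 < min T (T0 + δ / 2) := lt_min hT (by linarith)
  refine hbad _ hT' ?_
  have h3 : IntegrableOn (fun s => C.b 0 (P.map (X s)) 0 i) (Set.Ioc 0 (T0 - δ / 2)) := by
    have := inner_int_of_good (hgood (T0 - δ / 2) (by linarith))
      (continuous_const (y := EuclideanSpace.single i (1 : ℝ)))
    refine this.congr (ae_of_all _ fun s => ?_)
    simp [EuclideanSpace.inner_single_right]
  have h4 : IntegrableOn (fun s => C.b 0 (P.map (X s)) 0 i)
      (Set.Ioc (max 0 (T0 - δ / 2)) (min T (T0 + δ / 2))) := by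
    refine (h2.mono_set (Set.Ioc_subset_Ioc (le_max_left _ _) (min_le_left _ _))).congr_fun
      (fun s hs => ?_) measurableSet_Ioc
    have hs1 : T0 - δ / 2 < s := (le_max_right _ _).trans_lt hs.1
    have hs2 : s ≤ T0 + δ / 2 := hs.2.trans (min_le_right _ _)
    have : dist s T0 < δ := by
      rw [Real.dist_eq, abs_lt]
      constructor <;> linarith
    simp only [hn this]
    simp [EuclideanSpace.inner_single_right]
  refine (h3.union h4).mono_set fun s hs => ?_
  by_cases hc : s ≤ T0 - δ / 2
  · exact Or.inl ⟨hs.1, hc⟩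
  · exact Or.inr ⟨max_lt hs.1 (not_le.1 hc), hs.2⟩

/-- localised coordinate function -/
def locF {n m : ℕ} {q : Vec n × Vec m} (η : ContDiffBump q) (i : Fin n) (a : ℝ)
    (x : Vec n) (y : Vec m) : ℝ := η (x, y) * (x i + a)

theorem locF_testFun {n m : ℕ} {q : Vec n × Vec m} (η : ContDiffBump q) (i : Fin n) (a : ℝ) :
    TestFun2 (locF η i a) := by
  have hu : Function.uncurry (locF η i a) = fun z : Vec n × Vec m => η z * (z.1 i + a) := rfl
  refine ⟨?_, ?_⟩
  · rw [hu]
    refine η.contDiff.mul (ContDiff.add ?_ contDiff_const)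
    exact (EuclideanSpace.proj i : Vec n →L[ℝ] ℝ).contDiff.comp contDiff_fst
  · rw [hu]
    exact η.hasCompactSupport.mul_right

theorem locF_grad {n m : ℕ} {q : Vec n × Vec m} (η : ContDiffBump q) (i : Fin n) (a : ℝ)
    {x : Vec n} {y : Vec m} (h : (x, y) ∈ Metric.ball q η.rIn) :
    gradient (fun x' => locF η i a x' y) x = EuclideanSpace.single i (1 : ℝ) := by
  have h1 : (fun x' => locF η i a x' y) =ᶠ[𝓝 x] fun x' => x' i + a := by
    have hc : Continuous fun x' : Vec n => (x', y) := by fun_prop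
    have := hc.continuousAt.eventually (Metric.isOpen_ball.mem_nhds h)
    filter_upwards [this] with x' hx'
    rw [locF, η.one_of_mem_closedBall (Metric.ball_subset_closedBall hx'), one_mul]
  have h2 : HasGradientAt (fun x' : Vec n => x' i + a) (EuclideanSpace.single i (1 : ℝ)) x := by
    rw [hasGradientAt_iff_hasFDerivAt]
    have := ((EuclideanSpace.proj i : Vec n →L[ℝ] ℝ).hasFDerivAt
      (x := x)).add_const a
    have e : InnerProductSpace.toDual ℝ (Vec n) (EuclideanSpace.single i (1 : ℝ)) =
        (EuclideanSpace.proj i : Vec n →L[ℝ] ℝ) := by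
      ext v
      simp [EuclideanSpace.inner_single_left]
    exact e ▸ this
  exact (h2.congr_of_eventuallyEq h1).gradient

theorem freeze_local [IsProbabilityMeasure P] (SAh : SA13 C)
    (S : IsSFSolution C ε P ℱ X Y ξ ζ) {T0 : ℝ} {i : Fin n} (hT0 : 0 ≤ T0)
    (hgood : ∀ s < T0, GoodT C P X s)
    (hbad : ∀ T > T0, ¬ IntegrableOn (fun s => C.b 0 (P.map (X s)) 0 i) (Set.Ioc 0 T))
    {T : ℝ} (hT : T0 < T) {q : Vec n × Vec m} (η : ContDiffBump q) :
    ∀ᵐ ω ∂P, (X T0 ω, Y T0 ω) ∈ Metric.ball q η.rIn →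
      (X T ω, Y T ω) ∈ Metric.ball q η.rOut := by
  set A : Set Ω := {ω | (X T0 ω, Y T0 ω) ∈ Metric.ball q η.rIn} with hA
  have hAm : MeasurableSet[ℱ T0] A := by
    have hx : Measurable[ℱ T0] (X T0) := S.adaptX T0
    have hy : Measurable[ℱ T0] (Y T0) := S.adaptY T0
    exact (hx.prodMk hy) Metric.isOpen_ball.measurableSet
  have hAmm : MeasurableSet A := ℱ.le T0 _ hAm
  have hz : ∀ ω, Continuous fun s => (X s ω, Y s ω) := fun ω => (S.contX ω).prodMk (S.contY ω)
  have hzm : ∀ s, Measurable fun ω => (X s ω, Y s ω) := fun s => (S.measX s).prodMk (S.measY s)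
  have hzero : ∀ a, ∀ ω ∈ A, ∀ t > T0, ∫ s in Set.Ioc (0 : ℝ) t,
      genSF C ε (P.map (X s)) (locF η i a) (X s ω) (Y s ω) = 0 := by
    intro a ω hω t ht
    refine integral_undef (path_nonint SAh S (locF_testFun η i a).1 ω hgood hbad ?_ ht)
    have := (hz ω).continuousAt.eventually (Metric.isOpen_ball.mem_nhds hω)
    filter_upwards [this] with s hs
    exact locF_grad η i a hs
  have h_integ : ∀ a s, Integrable (fun ω => locF η i a (X s ω) (Y s ω)) P := by
    intro a s
    obtain ⟨B, hB⟩ := (locF_testFun η i a).2.exists_bound_of_continuous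
      (locF_testFun η i a).1.continuous
    refine Integrable.of_bound (C := B) ?_ (ae_of_all _ fun ω => hB (X s ω, Y s ω))
    exact ((locF_testFun η i a).1.continuous.measurable.comp (hzm s)).aestronglyMeasurable
  have hM : ∀ a, ∀ t > T0, t ≤ T → ∫ ω in A, locF η i a (X T ω) (Y T ω) ∂P =
      ∫ ω in A, locF η i a (X t ω) (Y t ω) ∂P := by
    intro a t ht htT
    have hmm := S.mart _ (locF_testFun η i a)
    have ht0 : 0 ≤ t := hT0.trans ht.le
    have h1 := setIntegral_condExp (ℱ.le t) (hmm.1 T (ht0.trans htT)).2 (ℱ.mono ht.le _ hAm)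
    rw [setIntegral_congr_ae hAmm ((hmm.2 t T ht0 htT).mono fun ω h _ => h)] at h1
    have e : ∀ r > T0, ∫ ω in A, (locF η i a (X r ω) (Y r ω) - ∫ s in Set.Ioc (0 : ℝ) r,
        genSF C ε (P.map (X s)) (locF η i a) (X s ω) (Y s ω)) ∂P =
        ∫ ω in A, locF η i a (X r ω) (Y r ω) ∂P := fun r hr =>
      setIntegral_congr_fun hAmm fun ω hω => by
        simp only [hzero a ω hω r hr, sub_zero]
    exact ((e t ht).symm.trans (h1.trans (e T hT))).symm
  have hdiff : ∀ s, ∫ ω in A, η (X s ω, Y s ω) ∂P =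
      ∫ ω in A, locF η i 1 (X s ω) (Y s ω) ∂P - ∫ ω in A, locF η i 0 (X s ω) (Y s ω) ∂P := by
    intro s
    rw [← integral_sub (h_integ 1 s).integrableOn (h_integ 0 s).integrableOn]
    refine integral_congr_ae (ae_of_all _ fun ω => ?_)
    simp only [locF]
    ring
  have hηi : ∀ s, Integrable (fun ω => η (X s ω, Y s ω)) P := fun s =>
    Integrable.of_bound (C := 1)
      (η.continuous.measurable.comp (hzm s)).aestronglyMeasurable (ae_of_all _ fun ω => by
        rw [Real.norm_eq_abs, abs_of_nonneg η.nonneg]; exact η.le_one)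
  have hlim : Tendsto (fun s => ∫ ω in A, η (X s ω, Y s ω) ∂P) (𝓝[>] T0)
      (𝓝 (∫ ω in A, η (X T0 ω, Y T0 ω) ∂P)) := by
    refine tendsto_integral_filter_of_dominated_convergence (fun _ => (1 : ℝ))
      (Eventually.of_forall fun s => (hηi s).aestronglyMeasurable.restrict)
      (Eventually.of_forall fun s => ae_of_all _ fun ω => ?_)
      (integrable_const _) (ae_of_all _ fun ω => ?_)
    · rw [Real.norm_eq_abs, abs_of_nonneg η.nonneg]; exact η.le_one
    · exact ((η.continuous.comp (hz ω)).tendsto T0).mono_left nhdsWithin_le_nhds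
  have hconst : Tendsto (fun s => ∫ ω in A, η (X s ω, Y s ω) ∂P) (𝓝[>] T0)
      (𝓝 (∫ ω in A, η (X T ω, Y T ω) ∂P)) := by
    refine tendsto_const_nhds.congr' ?_
    filter_upwards [Ioc_mem_nhdsGT hT] with s hs
    rw [hdiff, hdiff, hM 1 s hs.1 hs.2, hM 0 s hs.1 hs.2]
  have heq := tendsto_nhds_unique hconst hlim
  have h1 : ∫ ω in A, η (X T0 ω, Y T0 ω) ∂P = ∫ ω in A, (1 : ℝ) ∂P :=
    setIntegral_congr_fun hAmm fun ω hω =>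
      η.one_of_mem_closedBall (Metric.ball_subset_closedBall hω)
  have h2 : ∫ ω in A, (1 - η (X T ω, Y T ω)) ∂P = 0 := by
    rw [integral_sub (integrable_const _) (hηi T).integrableOn, heq, h1, sub_self]
  rw [integral_eq_zero_iff_of_nonneg (fun ω => sub_nonneg.2 η.le_one)
    ((integrable_const _).sub (hηi T).integrableOn)] at h2
  have h3 := (ae_restrict_iff' hAmm).1 h2
  filter_upwards [h3] with ω hω hin
  have h4 := hω hin
  have h5 : η (X T ω, Y T ω) ≠ 0 := by
    intro h6
    simp [h6] at h4
  rw [← η.support_eq]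
  exact h5

theorem freeze [IsProbabilityMeasure P] (SAh : SA13 C)
    (S : IsSFSolution C ε P ℱ X Y ξ ζ) {T0 : ℝ} {i : Fin n} (hT0 : 0 ≤ T0)
    (hgood : ∀ s < T0, GoodT C P X s)
    (hbad : ∀ T > T0, ¬ IntegrableOn (fun s => C.b 0 (P.map (X s)) 0 i) (Set.Ioc 0 T))
    {T : ℝ} (hT : T0 < T) : ∀ᵐ ω ∂P, Y T ω = Y T0 ω := by
  have h : ∀ j k : ℕ, ∀ᵐ ω ∂P,
      (X T0 ω, Y T0 ω) ∈ Metric.ball (TopologicalSpace.denseSeq (Vec n × Vec m) j)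
        (1 / ((k : ℝ) + 1)) →
      (X T ω, Y T ω) ∈ Metric.ball (TopologicalSpace.denseSeq (Vec n × Vec m) j)
        (2 * (1 / ((k : ℝ) + 1))) := fun j k =>
    freeze_local SAh S hT0 hgood hbad hT
      (⟨1 / ((k : ℝ) + 1), 2 * (1 / ((k : ℝ) + 1)), by positivity, by
        have : 0 < 1 / ((k : ℝ) + 1) := by positivity
        linarith⟩ : ContDiffBump (TopologicalSpace.denseSeq (Vec n × Vec m) j))
  have h' := ae_all_iff.2 fun j => ae_all_iff.2 (h j)
  filter_upwards [h'] with ω hω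
  have hd : dist (X T ω, Y T ω) (X T0 ω, Y T0 ω) ≤ 0 := by
    refine le_of_forall_pos_le_add fun e he => ?_
    obtain ⟨k, hk⟩ := exists_nat_one_div_lt (show 0 < e / 3 by linarith)
    obtain ⟨z, hj, ⟨j, rfl⟩⟩ := Metric.dense_iff.1
      (TopologicalSpace.denseRange_denseSeq (Vec n × Vec m)) (X T0 ω, Y T0 ω)
      (1 / ((k : ℝ) + 1)) (by positivity)
    rw [Metric.mem_ball, dist_comm] at hj
    have h2 := hω j k hj
    rw [Metric.mem_ball] at h2
    have := dist_triangle_right (X T ω, Y T ω) (X T0 ω, Y T0 ω)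
      (TopologicalSpace.denseSeq (Vec n × Vec m) j)
    linarith
  have := dist_le_zero.1 hd
  exact (Prod.ext_iff.1 this).2

theorem bad_coord {T0 : ℝ} (hbad : ∀ T > T0, ¬ GoodT C P X T) :
    ∃ i : Fin n, ∀ T > T0, ¬ IntegrableOn (fun s => C.b 0 (P.map (X s)) 0 i) (Set.Ioc 0 T) := by
  by_contra hcon
  push Not at hcon
  choose T hT hi using hcon
  have : ∃ T1 > T0, ∀ i, T1 ≤ T i := by
    have h := Filter.eventually_all.2 fun i => (Ioc_mem_nhdsGT (hT i) : ∀ᶠ s in 𝓝[>] T0, s ∈ Set.Ioc T0 (T i))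
    obtain ⟨s, hs, hs2⟩ := (h.and self_mem_nhdsWithin).exists
    exact ⟨s, hs2, fun i => (hs i).2⟩
  obtain ⟨T1, h1, h2⟩ := this
  refine hbad T1 h1 ?_
  have h3 : ∀ i, IntegrableOn (fun s => C.b 0 (P.map (X s)) 0 i) (Set.Ioc 0 T1) := fun i =>
    (hi i).mono_set (Set.Ioc_subset_Ioc_right (h2 i))
  have h4 : IntegrableOn (fun s => ∑ i, (C.b 0 (P.map (X s)) 0 i) •
      (EuclideanSpace.single i (1 : ℝ) : Vec n)) (Set.Ioc 0 T1) :=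
    integrable_finsetSum _ fun i _ => (h3 i).smul_const _
  refine h4.congr (ae_of_all _ fun s => ?_)
  ext k
  simp [Pi.single_apply]

theorem all_bound [IsProbabilityMeasure P] (SAh : SA13 C) (S : IsSFSolution C ε P ℱ X Y ξ ζ)
    {p C2 c K : ℝ} (hε : 0 < ε) (hC2 : 0 ≤ C2) (hc : 0 < c)
    (hly : ∀ R μ x y, memP2 μ → genY C ε μ (psiR p R) x y ≤
        ε⁻¹ * (C2 - c * (tauN R (‖y‖ ^ 2) * Phi p (‖y‖ ^ 2))))
    {t : ℝ} (ht0 : 0 ≤ t)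
    (hi : Integrable (fun ω => Phi p (‖Y 0 ω‖ ^ 2)) P)
    (hK0 : ∫ ω, Phi p (‖Y 0 ω‖ ^ 2) ∂P ≤ K) (hK : C2 ≤ c * K) :
    Integrable (fun ω => Phi p (‖Y t ω‖ ^ 2)) P ∧ ∫ ω, Phi p (‖Y t ω‖ ^ 2) ∂P ≤ K := by
  have gb : ∀ s, 0 ≤ s → GoodT C P X s →
      Integrable (fun ω => Phi p (‖Y s ω‖ ^ 2)) P ∧ ∫ ω, Phi p (‖Y s ω‖ ^ 2) ∂P ≤ K :=
    fun s h0 hs => good_bound SAh S hε hC2 hc hly h0 hs hi hK0 hK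
  by_cases hg : GoodT C P X t
  · exact gb t ht0 hg
  set G : Set ℝ := {s | 0 ≤ s ∧ GoodT C P X s} with hG
  have hG0 : (0 : ℝ) ∈ G := ⟨le_rfl, by simp [GoodT]⟩
  have hub : ∀ s ∈ G, s ≤ t := fun s hs => by
    by_contra hcon
    exact hg (hs.2.mono (not_le.1 hcon).le)
  have hGb : BddAbove G := ⟨t, hub⟩
  set T0 := sSup G with hT0d
  have hT0 : 0 ≤ T0 := le_csSup hGb hG0
  have hT0t : T0 ≤ t := csSup_le ⟨0, hG0⟩ hub
  have hgood : ∀ s < T0, GoodT C P X s := fun s hs => by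
    obtain ⟨r, hr, hsr⟩ := exists_lt_of_lt_csSup ⟨0, hG0⟩ hs
    exact hr.2.mono hsr.le
  have hbad : ∀ T > T0, ¬ GoodT C P X T := fun T hT h =>
    absurd (le_csSup hGb ⟨hT0.trans hT.le, h⟩) (not_le.2 hT)
  have hatT0 : Integrable (fun ω => Phi p (‖Y T0 ω‖ ^ 2)) P ∧
      ∫ ω, Phi p (‖Y T0 ω‖ ^ 2) ∂P ≤ K := by
    by_cases hz : T0 = 0
    · rw [hz]; exact ⟨hi, hK0⟩
    have hpos : 0 < T0 := lt_of_le_of_ne hT0 (Ne.symm hz)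
    set u : ℕ → ℝ := fun k => T0 - T0 * (1 / ((k : ℝ) + 1)) with hu
    have hu0 : ∀ k, 0 ≤ u k := fun k => by
      have : 1 / ((k : ℝ) + 1) ≤ 1 := by
        rw [div_le_one (by positivity)]
        linarith [(Nat.cast_nonneg k : (0 : ℝ) ≤ k)]
      have := mul_le_mul_of_nonneg_left this hpos.le
      simp only [hu]
      linarith
    have hu1 : ∀ k, u k < T0 := fun k => by
      have : 0 < T0 * (1 / ((k : ℝ) + 1)) := by positivity
      simp only [hu]
      linarith
    have hul : Tendsto u atTop (𝓝 T0) := by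
      have := (tendsto_one_div_add_atTop_nhds_zero_nat (𝕜 := ℝ)).const_mul T0 |>.const_sub T0
      simpa [hu] using this
    have hcont : ∀ ω, Continuous fun s => Phi p (‖Y s ω‖ ^ 2) := fun ω =>
      (Phi_cont p).comp ((S.contY ω).norm.pow 2)
    refine fatou_bound (F := fun k ω => Phi p (‖Y (u k) ω‖ ^ 2))
      (fun k => (gb _ (hu0 k) (hgood _ (hu1 k))).1)
      (fun k ω => Phi_nonneg p (by positivity)) ?_
      (fun k => (gb _ (hu0 k) (hgood _ (hu1 k))).2)
      (fun ω => ((hcont ω).tendsto T0).comp hul)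
    exact ((Phi_cont p).measurable.comp ((S.measY T0).norm.pow_const 2)).aestronglyMeasurable
  rcases hT0t.eq_or_lt with h | h
  · rw [← h]; exact hatT0
  obtain ⟨i, hib⟩ := bad_coord hbad
  have hae := freeze SAh S hT0 hgood hib h
  have hae2 : (fun ω => Phi p (‖Y T0 ω‖ ^ 2)) =ᵐ[P] fun ω => Phi p (‖Y t ω‖ ^ 2) :=
    hae.mono fun ω hω => by simp only [hω]
  exact ⟨hatT0.1.congr hae2, (integral_congr_ae hae2).symm.trans_le hatT0.2⟩
end


/-- **Estimate (3.11).** Under conditions A1–A3, for any `p ≥ 2` there is `C_p > 0` such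
that for all sufficiently small `ε > 0`, `sup_{t ≥ 0} E|Y^ε_t|ᵖ ≤ C_p (1 + E|ζ|ᵖ)`. -/
theorem uniform_moment_estimate_fast {n m d : ℕ} (C : Coeffs n m d) (SAh : SA13 C)
    {Ω : Type} [mΩ : MeasurableSpace Ω] (P : Measure Ω) (hP : IsProbabilityMeasure P)
    (ℱ : Filtration ℝ mΩ) (X : ℝ → ℝ → Ω → Vec n) (Y : ℝ → ℝ → Ω → Vec m)
    (ξ : Ω → Vec n) (ζ : Ω → Vec m)
    (hsol : ∀ ε ∈ Set.Ioo (0 : ℝ) 1, IsSFSolution C ε P ℱ (X ε) (Y ε) ξ ζ)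
    (p : ℝ) (hp : 2 ≤ p) (hmom : (∫⁻ ω, (‖ζ ω‖₊ : ℝ≥0∞) ^ p ∂P) < ⊤) :
    ∃ Cp > (0 : ℝ), ∃ ε₀ ∈ Set.Ioc (0 : ℝ) 1, ∀ ε ∈ Set.Ioo (0 : ℝ) ε₀, ∀ t : ℝ, 0 ≤ t →
      ∫ ω, ‖Y ε t ω‖ ^ p ∂P ≤ Cp * (1 + ∫ ω, ‖ζ ω‖ ^ p ∂P) := by
  obtain ⟨C2, hC2, δ, hδ, hly⟩ := lyap SAh hp
  have hγ := SAh.hγ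
  have hw := wgt_pos p 1
  have hcp : 0 < SAh.γ / 4 := by linarith
  have hD : 0 ≤ C2 / (SAh.γ / 4) := div_nonneg hC2 hcp.le
  have hnp : ∀ y : Vec m, (‖y‖ ^ 2) ^ (p / 2) = ‖y‖ ^ p := fun y => by
    rw [← Real.rpow_natCast, ← Real.rpow_mul (norm_nonneg y)]
    congr 1
    push_cast
    ring
  refine ⟨(p / 2) * (wgt p 1 + C2 / (SAh.γ / 4)), by positivity, min 1 (δ ^ 2),
    ⟨lt_min one_pos (by positivity), min_le_left _ _⟩, ?_⟩
  intro ε hε t ht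
  have hε1 : ε ∈ Set.Ioo (0 : ℝ) 1 := ⟨hε.1, hε.2.trans_le (min_le_left _ _)⟩
  have hεδ : Real.sqrt ε ≤ δ := by
    rw [Real.sqrt_le_left hδ.le]
    exact hε.2.le.trans (min_le_right _ _)
  have S := hsol ε hε1
  have hζm : AEStronglyMeasurable ζ P :=
    (S.measY 0).aestronglyMeasurable.congr S.initY
  have hp0 : 0 ≤ p := by linarith
  have hζi : Integrable (fun ω => ‖ζ ω‖ ^ p) P := by
    refine ⟨(hζm.norm.aemeasurable.pow_const p).aestronglyMeasurable, ?_⟩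
    rw [hasFiniteIntegral_iff_enorm]
    refine lt_of_eq_of_lt (lintegral_congr fun ω => ?_) hmom
    rw [Real.enorm_rpow_of_nonneg (norm_nonneg _) hp0, enorm_norm]
    rfl
  set I := ∫ ω, ‖ζ ω‖ ^ p ∂P with hI
  have hI0 : 0 ≤ I := integral_nonneg fun ω => by positivity
  have hYi : Integrable (fun ω => ‖Y ε 0 ω‖ ^ p) P :=
    hζi.congr (S.initY.mono fun ω h => by simp only [h])
  have hYI : ∫ ω, ‖Y ε 0 ω‖ ^ p ∂P = I :=
    integral_congr_ae (S.initY.mono fun ω h => by simp only [h])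
  have hbd : Integrable (fun ω => wgt p 1 * (1 + ‖Y ε 0 ω‖ ^ p)) P :=
    ((integrable_const (1 : ℝ)).add hYi).const_mul _
  have hle : ∀ ω, Phi p (‖Y ε 0 ω‖ ^ 2) ≤ wgt p 1 * (1 + ‖Y ε 0 ω‖ ^ p) := fun ω => by
    rw [← hnp]
    exact Phi_le_pow hp (by positivity)
  have hi : Integrable (fun ω => Phi p (‖Y ε 0 ω‖ ^ 2)) P := by
    refine Integrable.mono' hbd ?_ (ae_of_all _ fun ω => ?_)
    · exact ((Phi_cont p).measurable.comp ((S.measY 0).norm.pow_const 2)).aestronglyMeasurable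
    · rw [Real.norm_eq_abs, abs_of_nonneg (Phi_nonneg p (by positivity))]
      exact hle ω
  have hU0 : ∫ ω, Phi p (‖Y ε 0 ω‖ ^ 2) ∂P ≤ wgt p 1 * (1 + I) := by
    refine (integral_mono hi hbd hle).trans_eq ?_
    rw [integral_const_mul, integral_add (integrable_const _) hYi, hYI]
    simp
  have hK0 : wgt p 1 * (1 + I) ≤ (wgt p 1 + C2 / (SAh.γ / 4)) * (1 + I) := by
    have : 0 ≤ C2 / (SAh.γ / 4) * (1 + I) := mul_nonneg hD (by linarith)
    linarith
  have hK : C2 ≤ SAh.γ / 4 * ((wgt p 1 + C2 / (SAh.γ / 4)) * (1 + I)) := by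
    have h1 : SAh.γ / 4 * (C2 / (SAh.γ / 4)) = C2 := mul_div_cancel₀ _ hcp.ne'
    have h2 : SAh.γ / 4 * ((wgt p 1 + C2 / (SAh.γ / 4)) * (1 + I)) =
        SAh.γ / 4 * wgt p 1 * (1 + I) + SAh.γ / 4 * (C2 / (SAh.γ / 4)) * (1 + I) := by ring
    rw [h2, h1]
    have h3 : 0 ≤ SAh.γ / 4 * wgt p 1 * (1 + I) := by positivity
    have h4 : 0 ≤ C2 * I := mul_nonneg hC2 hI0
    linarith
  obtain ⟨hti, htb⟩ := all_bound SAh S hε.1 hC2 hcp (hly ε hε.1 hεδ) ht hi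
    (hU0.trans hK0) hK
  have hle2 : ∀ ω, ‖Y ε t ω‖ ^ p ≤ (p / 2) * Phi p (‖Y ε t ω‖ ^ 2) := fun ω => by
    rw [← hnp]
    exact pow_le_Phi hp (by positivity)
  have h5 : ∫ ω, ‖Y ε t ω‖ ^ p ∂P ≤ ∫ ω, (p / 2) * Phi p (‖Y ε t ω‖ ^ 2) ∂P :=
    integral_mono_of_nonneg (ae_of_all _ fun ω => by positivity) (hti.const_mul _)
      (ae_of_all _ hle2)
  rw [integral_const_mul] at h5
  refine h5.trans ?_
  rw [mul_assoc]
  exact mul_le_mul_of_nonneg_left htb (by linarith)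

end DiffApprox
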